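/- Let G be any bounded domain, fix τ ∈ (0,1), and let u, v ∈ C²(Ḡ) satisfy, for a constant K ≥ 1, max(F[u], P[u] − K) ≥ 0 ≥ min(F[v], −P[−v] + K) in G and v ≥ u on ∂G, and assume ‖u‖_{C^{1+χ}(G)}, ‖v‖_{C^{1+χ}(G)} ≤ M for a constant M ≥ 1. Then there exist a constant N ∈ (0,∞), depending only on τ, the diameter of G, d, K_0, and δ, and a constant η ∈ (0,1), depending only on τ, d, K_0, and δ, such that if K ≥ N M^{1/η}, then u − v ≤ N K^{−χ/4} + N M ω(M^{−1/τ} K^{−1}) in G. -/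

import Mathlib

noncomputable section

open MeasureTheory Set Filter Topology
open scoped ENNReal NNReal

/-- Euclidean space `ℝ^d`. -/
abbrev E (d : ℕ) : Type := EuclideanSpace ℝ (Fin d)

/-- Euclidean norm of a vector given as `Fin d → ℝ`. -/
def vecNorm {d : ℕ} (v : Fin d → ℝ) : ℝ := Real.sqrt (∑ i, (v i) ^ 2)

/-- Hilbert–Schmidt norm `‖σ‖² = tr σσ*` of a `d × d` matrix. -/
def matNorm {d : ℕ} (m : Fin d → Fin d → ℝ) : ℝ := Real.sqrt (∑ i, ∑ j, (m i j) ^ 2)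

/-- `m ∈ S_δ`: `m` is symmetric and `δ|ξ|² ≤ m_{ij}ξ^iξ^j ≤ δ⁻¹|ξ|²` for all `ξ`. -/
def memSdelta {d : ℕ} (δ : ℝ) (m : Fin d → Fin d → ℝ) : Prop :=
  (∀ i j, m i j = m j i) ∧
  ∀ ξ : Fin d → ℝ,
    δ * (∑ i, (ξ i) ^ 2) ≤ (∑ i, ∑ j, m i j * ξ i * ξ j) ∧
    (∑ i, ∑ j, m i j * ξ i * ξ j) ≤ δ⁻¹ * (∑ i, (ξ i) ^ 2)

/-- First partial derivative `D_i u(x)`. -/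
def D1 {d : ℕ} (u : E d → ℝ) (x : E d) (i : Fin d) : ℝ :=
  fderiv ℝ u x (EuclideanSpace.single i 1)

/-- Second partial derivative `D_{ij} u(x)`. -/
def D2 {d : ℕ} (u : E d → ℝ) (x : E d) (i j : Fin d) : ℝ :=
  fderiv ℝ (fun y => fderiv ℝ u y (EuclideanSpace.single j 1)) x (EuclideanSpace.single i 1)

/-- Third partial derivative `D_{ijk} u(x)`. -/
def D3 {d : ℕ} (u : E d → ℝ) (x : E d) (i j k : Fin d) : ℝ :=
  fderiv ℝ (fun y => D2 u y j k) x (EuclideanSpace.single i 1)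

/-- `L^{αβ}u(x) = a^{αβ}_{ij}(x) D_{ij}u(x) + b^{αβ}_i(x) D_i u(x) - c^{αβ}(x) u(x)`. -/
def Lop {d : ℕ} {A B : Type} (a : A → B → E d → Fin d → Fin d → ℝ)
    (b : A → B → E d → Fin d → ℝ) (c : A → B → E d → ℝ)
    (α : A) (β : B) (u : E d → ℝ) (x : E d) : ℝ :=
  (∑ i, ∑ j, a α β x i j * D2 u x i j) + (∑ i, b α β x i * D1 u x i) - c α β x * u x

/-- The Isaacs operator `F[u](x) = sup_α inf_β [L^{αβ}u(x) + f^{αβ}(x)]`. -/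
def Fop {d : ℕ} {A B : Type} (a : A → B → E d → Fin d → Fin d → ℝ)
    (b : A → B → E d → Fin d → ℝ) (c f : A → B → E d → ℝ) (u : E d → ℝ) (x : E d) : ℝ :=
  ⨆ α : A, ⨅ β : B, (Lop a b c α β u x + f α β x)

/-- `P[u](x) = P(D_{ij}u(x), D_i u(x), u(x))`. -/
def Pop {d : ℕ} (P : (Fin d → Fin d → ℝ) → (Fin d → ℝ) → ℝ → ℝ) (u : E d → ℝ) (x : E d) : ℝ :=
  P (fun i j => D2 u x i j) (fun i => D1 u x i) (u x)

/-- Assumption 2.1 of the paper on the coefficients `a, b, c, f`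
(with Hölder exponent `γ` for `a` and modulus `ω` for `b, c, f`). -/
def CoeffAssump {d : ℕ} {A B : Type} [MetricSpace A] [MetricSpace B]
    (δ K0 γ : ℝ) (ω : ℝ → ℝ)
    (a : A → B → E d → Fin d → Fin d → ℝ) (b : A → B → E d → Fin d → ℝ)
    (c f : A → B → E d → ℝ) : Prop :=
  (∀ α β x, memSdelta δ (a α β x)) ∧
  (∀ α β x, matNorm (a α β x) ≤ K0) ∧
  (∀ α β x, vecNorm (b α β x) ≤ K0) ∧
  (∀ α β x, 0 ≤ c α β x ∧ c α β x ≤ K0) ∧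
  (∀ α β x, |f α β x| ≤ K0) ∧
  (∀ α x, Continuous (fun β => a α β x) ∧ Continuous (fun β => b α β x) ∧
     Continuous (fun β => c α β x) ∧ Continuous (fun β => f α β x)) ∧
  (∀ (x : E d) (α₀ : A), ∀ ε : ℝ, 0 < ε → ∃ η : ℝ, 0 < η ∧ ∀ α : A, dist α α₀ < η → ∀ β : B,
     matNorm (fun i j => a α β x i j - a α₀ β x i j) < ε ∧
     vecNorm (fun i => b α β x i - b α₀ β x i) < ε ∧
     |c α β x - c α₀ β x| < ε ∧ |f α β x - f α₀ β x| < ε) ∧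
  (∀ α β x y, matNorm (fun i j => a α β x i j - a α β y i j) ≤ K0 * ‖x - y‖ ^ γ) ∧
  (∀ α β x y, vecNorm (fun i => b α β x i - b α β y i) ≤ K0 * ω ‖x - y‖) ∧
  (∀ α β x y, |c α β x - c α β y| ≤ K0 * ω ‖x - y‖) ∧
  (∀ α β x y, |f α β x - f α β y| ≤ K0 * ω ‖x - y‖)

/-- `ω` is a modulus of continuity with `t^χ ≤ ω(t)` on `[0,1]` (Remark 2.1). -/
def ModulusAssump (χ : ℝ) (ω : ℝ → ℝ) : Prop :=
  Continuous ω ∧ MonotoneOn ω (Set.Ici 0) ∧ ω 0 = 0 ∧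
  ∀ t : ℝ, t ∈ Set.Icc (0:ℝ) 1 → t ^ χ ≤ ω t

/-- `g ∈ C^{1,1}(ℝ^d)` with `‖g‖_{C^{1,1}} ≤ K0`. -/
def C11Bound {d : ℕ} (K0 : ℝ) (g : E d → ℝ) : Prop :=
  Differentiable ℝ g ∧ (∀ x, |g x| ≤ K0) ∧
  (∀ x y, |g x - g y| ≤ K0 * ‖x - y‖) ∧
  (∀ x y, ‖fderiv ℝ g x - fderiv ℝ g y‖ ≤ K0 * ‖x - y‖)

/-- Properties of the special function `P(u_{ij}, u_i, u)` constructed in Krylov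
[Methods Appl. Anal. 19 (2012)]: convex, positively homogeneous of degree one,
Lipschitz, with `(P_{u_{ij}}) ∈ S_δ̂`, `|(P_{u_i})| ≤ K₁`, `0 > P_u ≥ -K₁`
at any point of differentiability. -/
def PAssump {d : ℕ} (δhat K1 : ℝ)
    (P : (Fin d → Fin d → ℝ) → (Fin d → ℝ) → ℝ → ℝ) : Prop :=
  ConvexOn ℝ Set.univ (fun p : (Fin d → Fin d → ℝ) × (Fin d → ℝ) × ℝ => P p.1 p.2.1 p.2.2) ∧
  (∀ t : ℝ, 0 ≤ t → ∀ m v r, P (t • m) (t • v) (t * r) = t * P m v r) ∧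
  (∃ C : NNReal, LipschitzWith C
    (fun p : (Fin d → Fin d → ℝ) × (Fin d → ℝ) × ℝ => P p.1 p.2.1 p.2.2)) ∧
  (∀ p : (Fin d → Fin d → ℝ) × (Fin d → ℝ) × ℝ,
    DifferentiableAt ℝ (fun q : (Fin d → Fin d → ℝ) × (Fin d → ℝ) × ℝ => P q.1 q.2.1 q.2.2) p →
    memSdelta δhat (fun i j =>
      fderiv ℝ (fun q : (Fin d → Fin d → ℝ) × (Fin d → ℝ) × ℝ => P q.1 q.2.1 q.2.2) p
        (Pi.single i (Pi.single j (1:ℝ)), 0, 0)) ∧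
    vecNorm (fun i =>
      fderiv ℝ (fun q : (Fin d → Fin d → ℝ) × (Fin d → ℝ) × ℝ => P q.1 q.2.1 q.2.2) p
        (0, Pi.single i (1:ℝ), 0)) ≤ K1 ∧
    fderiv ℝ (fun q : (Fin d → Fin d → ℝ) × (Fin d → ℝ) × ℝ => P q.1 q.2.1 q.2.2) p (0, 0, 1) < 0 ∧
    -K1 ≤ fderiv ℝ (fun q : (Fin d → Fin d → ℝ) × (Fin d → ℝ) × ℝ => P q.1 q.2.1 q.2.2) p
      (0, 0, 1))

/-- A bounded domain of class `C²` (described by a global `C²` defining function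
with nonvanishing gradient on the boundary). -/
def IsC2Domain {d : ℕ} (G : Set (E d)) : Prop :=
  IsOpen G ∧ Bornology.IsBounded G ∧ G.Nonempty ∧ IsConnected G ∧
  ∃ ρ : E d → ℝ, ContDiff ℝ 2 ρ ∧ G = {x | ρ x < 0} ∧ ∀ x ∈ frontier G, fderiv ℝ ρ x ≠ 0

/-- The complete standing hypotheses (Assumption 2.1 etc.) of the paper. -/
def Setting {d : ℕ} {A B : Type} [MetricSpace A] [MetricSpace B]
    (δ K0 χ γ δhat K1 : ℝ) (ω : ℝ → ℝ)
    (a : A → B → E d → Fin d → Fin d → ℝ) (b : A → B → E d → Fin d → ℝ)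
    (c f : A → B → E d → ℝ) (G : Set (E d)) (g : E d → ℝ)
    (P : (Fin d → Fin d → ℝ) → (Fin d → ℝ) → ℝ → ℝ) : Prop :=
  1 ≤ d ∧ 0 < δ ∧ δ < 1 ∧ 0 ≤ K0 ∧ 0 < χ ∧ χ < 1 ∧
  γ = (4 - 3 * χ) / (8 - 4 * χ) ∧ 0 < δhat ∧ δhat < δ ∧ K0 ≤ K1 ∧
  Nonempty A ∧ Nonempty B ∧
  TopologicalSpace.SeparableSpace A ∧ TopologicalSpace.SeparableSpace B ∧
  CoeffAssump δ K0 γ ω a b c f ∧ IsC2Domain G ∧ C11Bound K0 g ∧ PAssump δhat K1 P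

/-- `u` is a solution of `max(F[u], P[u] - K) = 0` in `G` of class
`C^{1,1}_{loc}(G) ∩ C(Ḡ)` with boundary data `g` (the equation holding at almost
every point, as the second derivatives of a `C^{1,1}_{loc}` function exist a.e.). -/
def IsUSol {d : ℕ} {A B : Type} (a : A → B → E d → Fin d → Fin d → ℝ)
    (b : A → B → E d → Fin d → ℝ) (c f : A → B → E d → ℝ)
    (G : Set (E d)) (g : E d → ℝ)
    (P : (Fin d → Fin d → ℝ) → (Fin d → ℝ) → ℝ → ℝ) (K : ℝ) (u : E d → ℝ) : Prop :=
  ContinuousOn u (closure G) ∧ Set.EqOn u g (frontier G) ∧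
  DifferentiableOn ℝ u G ∧
  (∀ x ∈ G, ∃ r : ℝ, 0 < r ∧ Metric.ball x r ⊆ G ∧
     ∃ C : NNReal, LipschitzOnWith C (fderiv ℝ u) (Metric.ball x r)) ∧
  (∀ᵐ x ∂(volume : Measure (E d)), x ∈ G →
     max (Fop a b c f u x) (Pop P u x - K) = 0)

/-- `v` is a solution of `min(F[v], -P[-v] + K) = 0` in `G` of class
`C^{1,1}_{loc}(G) ∩ C(Ḡ)` with boundary data `g`. -/
def IsVSol {d : ℕ} {A B : Type} (a : A → B → E d → Fin d → Fin d → ℝ)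
    (b : A → B → E d → Fin d → ℝ) (c f : A → B → E d → ℝ)
    (G : Set (E d)) (g : E d → ℝ)
    (P : (Fin d → Fin d → ℝ) → (Fin d → ℝ) → ℝ → ℝ) (K : ℝ) (v : E d → ℝ) : Prop :=
  ContinuousOn v (closure G) ∧ Set.EqOn v g (frontier G) ∧
  DifferentiableOn ℝ v G ∧
  (∀ x ∈ G, ∃ r : ℝ, 0 < r ∧ Metric.ball x r ⊆ G ∧
     ∃ C : NNReal, LipschitzOnWith C (fderiv ℝ v) (Metric.ball x r)) ∧
  (∀ᵐ x ∂(volume : Measure (E d)), x ∈ G →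
     min (Fop a b c f v x) (-(Pop P (fun y => -(v y)) x) + K) = 0)

/-- `G_ε = {x ∈ G : dist(x, ∂G) > ε}`. -/
def Gshrink {d : ℕ} (G : Set (E d)) (ε : ℝ) : Set (E d) :=
  {x ∈ G | ε < Metric.infDist x (frontier G)}

/-- `u ∈ C^{1+χ}(Q)` with `‖u‖_{C^{1+χ}(Q)} ≤ Cb` (stated through the three
constituent quantities of the norm). -/
def HolderBound {d : ℕ} (χ : ℝ) (Q : Set (E d)) (u : E d → ℝ) (Cb : ℝ) : Prop :=
  (∀ x ∈ Q, DifferentiableAt ℝ u x) ∧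
  (∀ x ∈ Q, |u x| ≤ Cb) ∧
  (∀ x ∈ Q, ∀ y ∈ Q, |u x - u y| ≤ Cb * ‖x - y‖) ∧
  (∀ x ∈ Q, ∀ y ∈ Q, vecNorm (fun i => D1 u x i - D1 u y i) ≤ Cb * ‖x - y‖ ^ χ)

/-- `w` is a (continuous) viscosity solution of `F[w] = 0` in `G` with `w = g` on `∂G`. -/
def ViscositySolution {d : ℕ} {A B : Type} (a : A → B → E d → Fin d → Fin d → ℝ)
    (b : A → B → E d → Fin d → ℝ) (c f : A → B → E d → ℝ)
    (G : Set (E d)) (g : E d → ℝ) (w : E d → ℝ) : Prop :=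
  ContinuousOn w (closure G) ∧ Set.EqOn w g (frontier G) ∧
  (∀ φ : E d → ℝ, ContDiff ℝ (⊤ : ℕ∞) φ → ∀ x0 ∈ G,
     IsLocalMax (fun x => φ x - w x) x0 → φ x0 - w x0 = 0 → Fop a b c f φ x0 ≤ 0) ∧
  (∀ φ : E d → ℝ, ContDiff ℝ (⊤ : ℕ∞) φ → ∀ x0 ∈ G,
     IsLocalMin (fun x => φ x - w x) x0 → φ x0 - w x0 = 0 → 0 ≤ Fop a b c f φ x0)


lemma sum_rot {d : ℕ} (g : Fin d → Fin d → Fin d → ℝ) :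
    ∑ i, ∑ j, ∑ k, g i j k = ∑ k, ∑ i, ∑ j, g i j k :=
  (Finset.sum_congr rfl fun _ _ => Finset.sum_comm).trans Finset.sum_comm

lemma psd_pair {d : ℕ} (m X : Fin d → Fin d → ℝ) (hs : ∀ i j, m i j = m j i)
    (hm : ∀ ξ : Fin d → ℝ, 0 ≤ ∑ i, ∑ j, m i j * ξ i * ξ j)
    (hX : ∀ ξ : Fin d → ℝ, 0 ≤ ∑ i, ∑ j, X i j * ξ i * ξ j) :
    0 ≤ ∑ i, ∑ j, m i j * X i j := by
  have hpsd : (Matrix.of m).PosSemidef := by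
    refine Matrix.PosSemidef.of_dotProduct_mulVec_nonneg ?_ ?_
    · ext i j
      simp [hs i j]
    · intro ξ
      have := hm ξ
      change 0 ≤ ∑ i, ξ i * ∑ j, m i j * ξ j
      simp only [Finset.mul_sum]
      exact this.trans_eq (Finset.sum_congr rfl fun _ _ => Finset.sum_congr rfl fun _ _ => by ring)
  obtain ⟨B, hB⟩ : ∃ B : Matrix (Fin d) (Fin d) ℝ, Matrix.of m = B.conjTranspose * B := by
    open scoped MatrixOrder in
    exact CStarAlgebra.nonneg_iff_eq_star_mul_self.mp hpsd.nonneg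
  have h2 : ∀ i j, m i j = ∑ k, B k i * B k j := by
    intro i j
    have := congrFun (congrFun hB i) j
    simpa [Matrix.mul_apply] using this
  have : ∑ i, ∑ j, m i j * X i j = ∑ k, ∑ i, ∑ j, X i j * B k i * B k j := by
    rw [← sum_rot]
    refine Finset.sum_congr rfl fun i _ => Finset.sum_congr rfl fun j _ => ?_
    rw [h2, Finset.sum_mul]
    exact Finset.sum_congr rfl fun _ _ => by ring
  rw [this]
  exact Finset.sum_nonneg fun k _ => hX (B k)

lemma vecNorm_sq {d : ℕ} (v : Fin d → ℝ) : vecNorm v ^ 2 = ∑ i, v i ^ 2 :=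
  Real.sq_sqrt (Finset.sum_nonneg fun _ _ => sq_nonneg _)

lemma matNorm_sq {d : ℕ} (v : Fin d → Fin d → ℝ) : matNorm v ^ 2 = ∑ i, ∑ j, v i j ^ 2 :=
  Real.sq_sqrt (Finset.sum_nonneg fun _ _ => Finset.sum_nonneg fun _ _ => sq_nonneg _)

lemma vecNorm_nonneg {d : ℕ} (v : Fin d → ℝ) : 0 ≤ vecNorm v := Real.sqrt_nonneg _

lemma cs_vec {d : ℕ} (v w : Fin d → ℝ) : |∑ i, v i * w i| ≤ vecNorm v * vecNorm w := by
  refine abs_le_of_sq_le_sq ?_ (mul_nonneg (vecNorm_nonneg _) (vecNorm_nonneg _))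
  rw [mul_pow, vecNorm_sq, vecNorm_sq]
  exact Finset.sum_mul_sq_le_sq_mul_sq _ _ _

lemma vecNorm_eq {d : ℕ} (x : E d) : vecNorm (fun i => x i) = ‖x‖ := by
  rw [EuclideanSpace.norm_eq]; simp [vecNorm]

/-- trace lower bound -/
lemma trace_lower {d : ℕ} {δ : ℝ} {m : Fin d → Fin d → ℝ} (hm : memSdelta δ m)
    (X : Fin d → Fin d → ℝ)
    (hX : ∀ ξ : Fin d → ℝ, 0 ≤ ∑ i, ∑ j, X i j * ξ i * ξ j) :
    δ * ∑ i, X i i ≤ ∑ i, ∑ j, m i j * X i j := by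
  have := psd_pair (fun i j => m i j - if i = j then δ else 0) X
    (by intro i j; simp only [hm.1 i j, eq_comm])
    (by
      intro ξ
      have := (hm.2 ξ).1
      simp only [sub_mul, Finset.sum_sub_distrib, ite_mul, zero_mul, Finset.sum_ite_eq,
        Finset.mem_univ, if_true]
      rw [Finset.mul_sum] at this
      simp only [pow_two, ← mul_assoc] at this
      linarith) hX
  simp only [sub_mul, Finset.sum_sub_distrib, ite_mul, zero_mul, Finset.sum_ite_eq,
        Finset.mem_univ, if_true] at this
  rw [Finset.mul_sum]; linarith

lemma diag_bounds {d : ℕ} {δ : ℝ} {m : Fin d → Fin d → ℝ} (hm : memSdelta δ m) (k : Fin d) :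
    δ ≤ m k k ∧ m k k ≤ δ⁻¹ := by
  have := hm.2 (Pi.single k 1)
  simpa [Pi.single_apply] using this

lemma trace_upper {d : ℕ} {δ : ℝ} {m : Fin d → Fin d → ℝ} (hm : memSdelta δ m) :
    ∑ i, m i i ≤ d * δ⁻¹ := by
  calc ∑ i, m i i ≤ ∑ _i : Fin d, δ⁻¹ := Finset.sum_le_sum fun i _ => (diag_bounds hm i).2
    _ = _ := by simp

/-- `tr(mX) ≤ c d/δ` if `X ≤ c`. -/
lemma trace_le {d : ℕ} {δ c : ℝ} {m : Fin d → Fin d → ℝ} (hδ : 0 < δ) (hc : 0 ≤ c)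
    (hm : memSdelta δ m)
    (X : Fin d → Fin d → ℝ)
    (hX : ∀ ξ : Fin d → ℝ, ∑ i, ∑ j, X i j * ξ i * ξ j ≤ c * ∑ i, ξ i ^ 2) :
    ∑ i, ∑ j, m i j * X i j ≤ c * (d * δ⁻¹) := by
  have := psd_pair m (fun i j => (if i = j then c else 0) - X i j) hm.1
    (fun ξ => le_trans (mul_nonneg hδ.le (Finset.sum_nonneg fun _ _ => sq_nonneg _)) (hm.2 ξ).1)
    (by
      intro ξ
      have := hX ξ
      simp only [sub_mul, Finset.sum_sub_distrib, ite_mul, zero_mul, Finset.sum_ite_eq,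
        Finset.mem_univ, if_true]
      rw [Finset.mul_sum] at this
      simp only [pow_two, ← mul_assoc] at this
      linarith)
  simp only [mul_sub, Finset.sum_sub_distrib, mul_ite, mul_zero, Finset.sum_ite_eq,
        Finset.mem_univ, if_true] at this
  rw [← Finset.sum_mul] at this
  have h3 := mul_le_mul_of_nonneg_left (trace_upper hm) hc
  linarith

/-- Ishii-type matrix inequality. -/
lemma ishii {d : ℕ} {δ κ Λ : ℝ} (hδ : 0 < δ) (hκ : 0 < κ) (hΛ : 0 ≤ Λ)
    {m n : Fin d → Fin d → ℝ} (hm : memSdelta δ m)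
    (X Y : Fin d → Fin d → ℝ) (hYs : ∀ i j, Y i j = Y j i)
    (hXY : ∀ ξ ζ : Fin d → ℝ, ∑ i, ∑ j, X i j * ξ i * ξ j - ∑ i, ∑ j, Y i j * ζ i * ζ j
      ≤ 2 * κ * ∑ i, (ξ i - ζ i) ^ 2)
    (hY : ∀ ξ : Fin d → ℝ, ∑ i, ∑ j, Y i j * ξ i * ξ j ≤ Λ * ∑ i, ξ i ^ 2) :
    ∑ i, ∑ j, m i j * X i j - ∑ i, ∑ j, n i j * Y i j ≤
      (Λ + 2 * κ) / (4 * δ) * matNorm (fun i j => m i j - n i j) ^ 2 := by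
  set s : ℝ := 1 / (Λ + 2 * κ) with hs
  have hL : 0 < Λ + 2 * κ := by positivity
  have hs0 : 0 < s := by positivity
  have hsL : s * (Λ + 2 * κ) = 1 := by rw [hs]; field_simp
  -- Y²
  have hYY : ∀ ξ : Fin d → ℝ, ∑ i, ∑ j, (∑ k, Y k i * Y k j) * ξ i * ξ j
      = ∑ k, (∑ i, Y k i * ξ i) ^ 2 := by
    intro ξ
    simp only [Finset.sum_mul, pow_two, Finset.mul_sum]
    rw [sum_rot]
    exact Finset.sum_congr rfl fun _ _ => Finset.sum_congr rfl fun _ _ =>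
      Finset.sum_congr rfl fun _ _ => by ring
  have hq : ∀ ξ : Fin d → ℝ, 0 ≤ ∑ i, ∑ j, (Y i j - X i j - s * ∑ k, Y k i * Y k j) * ξ i * ξ j := by
    intro ξ
    set w : Fin d → ℝ := fun k => ∑ i, Y k i * ξ i with hw
    have h1 := hXY ξ (fun i => ξ i - s * w i)
    have h2 := hY w
    have h3 := hYY ξ
    have h4 : ∑ i, ∑ j, Y i j * (ξ i - s * w i) * (ξ j - s * w j) =
        ∑ i, ∑ j, Y i j * ξ i * ξ j - 2 * s * ∑ k, w k ^ 2 + s ^ 2 * ∑ i, ∑ j, Y i j * w i * w j := by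
      have e1 : ∑ k, w k ^ 2 = ∑ i, ∑ j, Y i j * w i * ξ j := by
        refine Finset.sum_congr rfl fun k _ => ?_
        rw [pow_two]; nth_rewrite 2 [hw]
        simp only [Finset.mul_sum]
        exact Finset.sum_congr rfl fun _ _ => by ring
      have e2 : ∑ k, w k ^ 2 = ∑ i, ∑ j, Y i j * ξ i * w j := by
        rw [e1, Finset.sum_comm]
        exact Finset.sum_congr rfl fun _ _ => Finset.sum_congr rfl fun _ _ => by rw [hYs]; ring
      have : 2 * s * ∑ k, w k ^ 2 = s * ∑ i, ∑ j, Y i j * w i * ξ j + s * ∑ i, ∑ j, Y i j * ξ i * w j := by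
        rw [← e1, ← e2]; ring
      rw [this]
      simp only [Finset.mul_sum, ← Finset.sum_add_distrib, ← Finset.sum_sub_distrib]
      exact Finset.sum_congr rfl fun _ _ => Finset.sum_congr rfl fun _ _ => by ring
    have h5 : ∑ i, (ξ i - (ξ i - s * w i)) ^ 2 = s ^ 2 * ∑ k, w k ^ 2 := by
      rw [Finset.mul_sum]; exact Finset.sum_congr rfl fun _ _ => by ring
    have h6 : ∑ i, ∑ j, (Y i j - X i j - s * ∑ k, Y k i * Y k j) * ξ i * ξ j =
      ∑ i, ∑ j, Y i j * ξ i * ξ j - ∑ i, ∑ j, X i j * ξ i * ξ j - s * ∑ k, w k ^ 2 := by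
      rw [← h3]
      simp only [Finset.mul_sum, ← Finset.sum_sub_distrib]
      refine Finset.sum_congr rfl fun _ _ => Finset.sum_congr rfl fun _ _ => ?_
      rw [← Finset.mul_sum]; ring
    rw [h6]
    rw [h4, h5] at h1
    have h7 : s ^ 2 * ∑ i, ∑ j, Y i j * w i * w j ≤ s ^ 2 * (Λ * ∑ i, w i ^ 2) :=
      mul_le_mul_of_nonneg_left h2 (by positivity)
    have h8 : s ^ 2 * (Λ * ∑ i, w i ^ 2) + 2 * κ * (s ^ 2 * ∑ k, w k ^ 2) = s * ∑ k, w k ^ 2 := by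
      linear_combination (s * ∑ k, w k ^ 2) * hsL
    linarith
  have hp := psd_pair m _ hm.1
    (fun ξ => le_trans (mul_nonneg hδ.le (Finset.sum_nonneg fun _ _ => sq_nonneg _)) (hm.2 ξ).1) hq
  have ht := trace_lower hm (fun i j => ∑ k, Y k i * Y k j)
    (fun ξ => by rw [hYY]; exact Finset.sum_nonneg fun _ _ => sq_nonneg _)
  rw [matNorm_sq]
  have ht2 : ∑ i, ∑ k, Y k i * Y k i = ∑ i, ∑ j, Y i j ^ 2 := by
    rw [Finset.sum_comm]
    exact Finset.sum_congr rfl fun _ _ => Finset.sum_congr rfl fun _ _ => by ring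
  rw [ht2] at ht
  have hp2 : ∑ i, ∑ j, m i j * (Y i j - X i j - s * ∑ k, Y k i * Y k j) =
      ∑ i, ∑ j, m i j * Y i j - ∑ i, ∑ j, m i j * X i j
        - s * ∑ i, ∑ j, m i j * ∑ k, Y k i * Y k j := by
    simp only [Finset.mul_sum (s := (Finset.univ : Finset (Fin d))) (a := s), ← Finset.sum_sub_distrib]
    refine Finset.sum_congr rfl fun _ _ => Finset.sum_congr rfl fun _ _ => ?_
    rw [← Finset.mul_sum]; ring
  rw [hp2] at hp
  have ht3 := mul_le_mul_of_nonneg_left ht hs0.le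
  have hfin : ∑ i, ∑ j, m i j * Y i j - ∑ i, ∑ j, n i j * Y i j ≤
     s * (δ * ∑ i, ∑ j, Y i j ^ 2) + (Λ + 2 * κ) / (4 * δ) * ∑ i, ∑ j, (m i j - n i j) ^ 2 := by
    simp only [Finset.mul_sum, ← Finset.sum_sub_distrib, ← Finset.sum_add_distrib]
    refine Finset.sum_le_sum fun i _ => Finset.sum_le_sum fun j _ => ?_
    rw [hs]
    have key : 1 / (Λ + 2 * κ) * (δ * Y i j ^ 2) + (Λ + 2 * κ) / (4 * δ) * (m i j - n i j) ^ 2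
      - (m i j * Y i j - n i j * Y i j) =
      δ / (Λ + 2 * κ) * (Y i j - (Λ + 2 * κ) / (2 * δ) * (m i j - n i j)) ^ 2 := by
      field_simp; ring
    have : 0 ≤ δ / (Λ + 2 * κ) * (Y i j - (Λ + 2 * κ) / (2 * δ) * (m i j - n i j)) ^ 2 := by
      positivity
    linarith
  linarith


lemma second_test {g g' : ℝ → ℝ} {s : ℝ} (h1 : ∀ᶠ t in 𝓝 (0:ℝ), HasDerivAt g (g' t) t)
    (h2 : HasDerivAt g' s 0) (hmax : IsLocalMax g 0) : g' 0 = 0 ∧ s ≤ 0 := by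
  have h10 : HasDerivAt g (g' 0) 0 := h1.self_of_nhds
  have hg0 : g' 0 = 0 := hmax.hasDerivAt_eq_zero h10
  refine ⟨hg0, ?_⟩
  by_contra hs
  push Not at hs
  have hev : deriv g =ᶠ[𝓝 0] g' := h1.mono fun t ht => ht.deriv
  have hdd : deriv (deriv g) 0 = s := by rw [hev.deriv_eq]; exact h2.deriv
  have hmin : IsLocalMin g 0 := isLocalMin_of_deriv_deriv_pos (by rw [hdd]; exact hs)
    (by rw [h10.deriv, hg0]) h10.continuousAt
  have hc : g =ᶠ[𝓝 0] fun _ => g 0 := by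
    filter_upwards [hmin, hmax] with t ha hb using le_antisymm hb ha
  have hc' : deriv g =ᶠ[𝓝 0] fun _ => 0 := by
    refine hc.deriv.trans ?_
    simp
  have : deriv (deriv g) 0 = 0 := by rw [hc'.deriv_eq]; simp
  linarith

lemma vec_expand {d : ℕ} (ξ : Fin d → ℝ) :
    (WithLp.toLp 2 ξ : E d) = ∑ j, ξ j • EuclideanSpace.single j (1:ℝ) := by
  ext i
  simp [Pi.single_apply]

lemma fderiv_expand {d : ℕ} (u : E d → ℝ) (x : E d) (ξ : Fin d → ℝ) :
    fderiv ℝ u x (WithLp.toLp 2 ξ) = ∑ j, ξ j * D1 u x j := by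
  rw [vec_expand, map_sum]; simp [D1]

lemma line_deriv1 {d : ℕ} {u : E d → ℝ} {x : E d} (hu : ContDiffAt ℝ 2 u x) (ξ : Fin d → ℝ) :
    ∀ᶠ t in 𝓝 (0:ℝ), HasDerivAt (fun t : ℝ => u (x + t • WithLp.toLp 2 ξ))
      (∑ j, ξ j * D1 u (x + t • WithLp.toLp 2 ξ) j) t := by
  have h1 : ∀ᶠ y in 𝓝 x, DifferentiableAt ℝ u y := by
    filter_upwards [hu.eventually (by simp)] with y hy using hy.differentiableAt (by norm_num)
  have hc : Tendsto (fun t : ℝ => x + t • (WithLp.toLp 2 ξ : E d)) (𝓝 0) (𝓝 x) := by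
    have : Continuous (fun t : ℝ => x + t • (WithLp.toLp 2 ξ : E d)) := by fun_prop
    simpa using this.tendsto 0
  filter_upwards [hc.eventually h1] with t ht
  have hl : HasDerivAt (fun t : ℝ => x + t • (WithLp.toLp 2 ξ : E d)) (WithLp.toLp 2 ξ) t := by
    simpa using ((hasDerivAt_id t).smul_const (WithLp.toLp 2 ξ : E d)).const_add x
  have := ht.hasFDerivAt.comp_hasDerivAt t hl
  rw [fderiv_expand] at this
  exact this

lemma D1_diff {d : ℕ} {u : E d → ℝ} {x : E d} (hu : ContDiffAt ℝ 2 u x) (j : Fin d) :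
    DifferentiableAt ℝ (fun y => D1 u y j) x := by
  have h := (hu.fderiv_right (m := 1) (by norm_num)).differentiableAt (by norm_num)
  exact h.clm_apply (differentiableAt_const _)

lemma line_deriv2 {d : ℕ} {u : E d → ℝ} {x : E d} (hu : ContDiffAt ℝ 2 u x) (ξ : Fin d → ℝ) :
    HasDerivAt (fun t : ℝ => ∑ j, ξ j * D1 u (x + t • WithLp.toLp 2 ξ) j)
      (∑ i, ∑ j, D2 u x i j * ξ i * ξ j) 0 := by
  have hl : HasDerivAt (fun t : ℝ => x + t • (WithLp.toLp 2 ξ : E d)) (WithLp.toLp 2 ξ) 0 := by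
    simpa using ((hasDerivAt_id (0:ℝ)).smul_const (WithLp.toLp 2 ξ : E d)).const_add x
  have hj : ∀ j, HasDerivAt (fun t : ℝ => ξ j * D1 u (x + t • WithLp.toLp 2 ξ) j)
      (ξ j * ∑ i, ξ i * D2 u x i j) 0 := by
    intro j
    refine HasDerivAt.const_mul _ ?_
    have h := (D1_diff hu j).hasFDerivAt
    have hx : x = x + (0:ℝ) • (WithLp.toLp 2 ξ : E d) := by simp
    rw [hx] at h
    have := h.comp_hasDerivAt (0:ℝ) hl
    rw [fderiv_expand, ← hx] at this
    exact this
  have := HasDerivAt.fun_sum (u := Finset.univ) fun j _ => hj j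
  have e : (∑ i, ∑ j, D2 u x i j * ξ i * ξ j) = ∑ j, ξ j * ∑ i, ξ i * D2 u x i j := by
    rw [Finset.sum_comm]
    refine Finset.sum_congr rfl fun j _ => ?_
    rw [Finset.mul_sum]
    exact Finset.sum_congr rfl fun i _ => by ring
  rw [e]
  exact this

lemma D2_symm {d : ℕ} {u : E d → ℝ} {x : E d} (hu : ContDiffAt ℝ 2 u x) (i j : Fin d) :
    D2 u x i j = D2 u x j i := by
  have h := hu.isSymmSndFDerivAt (by simp)
  have hd := (hu.fderiv_right (m := 1) (by norm_num)).differentiableAt (by norm_num)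
  have e : ∀ i j, D2 u x i j = fderiv ℝ (fderiv ℝ u) x (EuclideanSpace.single i 1)
      (EuclideanSpace.single j 1) := by
    intro i j
    unfold D2
    rw [fderiv_clm_apply hd (differentiableAt_const _)]
    simp
  rw [e, e]; exact h _ _

lemma D1_neg {d : ℕ} (v : E d → ℝ) (x : E d) (j : Fin d) :
    D1 (fun y => -(v y)) x j = - D1 v x j := by
  unfold D1; rw [fderiv_fun_neg]; rfl

lemma D2_neg {d : ℕ} (v : E d → ℝ) (x : E d) (i j : Fin d) :
    D2 (fun y => -(v y)) x i j = - D2 v x i j := by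
  have : (fun y => D1 (fun y => -(v y)) y j) = fun y => - D1 v y j := by
    funext y; exact D1_neg v y j
  change D1 (fun y => D1 (fun y => -(v y)) y j) x i = _
  rw [this, D1_neg]; rfl

lemma vecNorm_D1_le {d : ℕ} (L : E d →L[ℝ] ℝ) :
    vecNorm (fun i => L (EuclideanSpace.single i 1)) ≤ ‖L‖ := by
  set g : Fin d → ℝ := fun i => L (EuclideanSpace.single i 1) with hg
  have h1 : L (WithLp.toLp 2 g) = vecNorm g ^ 2 := by
    rw [vec_expand, map_sum, vecNorm_sq]
    refine Finset.sum_congr rfl fun i _ => ?_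
    rw [map_smul, pow_two]; rfl
  have h2 := L.le_opNorm (WithLp.toLp 2 g)
  rw [h1, ← vecNorm_eq] at h2
  change ‖vecNorm g ^ 2‖ ≤ ‖L‖ * vecNorm g at h2
  rw [Real.norm_of_nonneg (by positivity)] at h2
  rcases (vecNorm_nonneg g).eq_or_lt with h | h
  · rw [← h]; exact norm_nonneg _
  · rw [pow_two] at h2; exact le_of_mul_le_mul_right h2 h

lemma opNorm_le_vecNorm {d : ℕ} (L : E d →L[ℝ] ℝ) :
    ‖L‖ ≤ vecNorm (fun i => L (EuclideanSpace.single i 1)) := by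
  refine L.opNorm_le_bound (vecNorm_nonneg _) fun x => ?_
  have h1 : L x = ∑ i, L (EuclideanSpace.single i 1) * x i := by
    have : x = ∑ j, x j • EuclideanSpace.single j (1:ℝ) := vec_expand (fun i => x i)
    conv_lhs => rw [this]
    rw [map_sum]
    refine Finset.sum_congr rfl fun i _ => ?_
    rw [map_smul, smul_eq_mul, mul_comm]
  rw [h1, ← vecNorm_eq x]
  exact cs_vec _ _

/-- bound on `P`. -/
lemma P_bound {d : ℕ} {δhat K1 : ℝ} {P : (Fin d → Fin d → ℝ) → (Fin d → ℝ) → ℝ → ℝ}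
    (hδ : 0 < δhat) (hP : PAssump δhat K1 P) {c : ℝ} (hc : 0 ≤ c)
    (X : Fin d → Fin d → ℝ) (p : Fin d → ℝ) (r : ℝ)
    (hX : ∀ ξ : Fin d → ℝ, ∑ i, ∑ j, X i j * ξ i * ξ j ≤ c * ∑ i, ξ i ^ 2) :
    P X p r ≤ c * (d * δhat⁻¹) + K1 * vecNorm p + K1 * |r| := by
  obtain ⟨-, hhom, ⟨C, hC⟩, hdiff⟩ := hP
  set f : (Fin d → Fin d → ℝ) × (Fin d → ℝ) × ℝ → ℝ := fun q => P q.1 q.2.1 q.2.2 with hf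
  have hdense : Dense {q | DifferentiableAt ℝ f q} :=
    Measure.dense_of_ae (hC.ae_differentiableAt (μ := Measure.addHaar))
  refine le_of_forall_pos_le_add fun e he => ?_
  obtain ⟨q, hq, hqd⟩ := hdense.exists_dist_lt (X, p, r) (ε := e / (2 * C + 1)) (by positivity)
  have hnorm : ‖fderiv ℝ f q‖ ≤ C := norm_fderiv_le_of_lipschitz ℝ hC
  have hEuler : fderiv ℝ f q q = f q := by
    have hl : HasDerivAt (fun t : ℝ => t • q) q 1 := by
      simpa using (hasDerivAt_id (1:ℝ)).smul_const q
    have h1 : HasFDerivAt f (fderiv ℝ f q) ((1:ℝ) • q) := by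
      rw [one_smul]; exact hq.hasFDerivAt
    have h2 := h1.comp_hasDerivAt (1:ℝ) hl
    have h3 : HasDerivAt (fun t : ℝ => t * f q) (f q) 1 := by
      simpa using (hasDerivAt_id (1:ℝ)).mul_const (f q)
    have h4 : (f ∘ fun t : ℝ => t • q) =ᶠ[𝓝 1] fun t => t * f q := by
      filter_upwards [lt_mem_nhds (show (0:ℝ) < 1 by norm_num)] with t ht
      exact hhom t ht.le q.1 q.2.1 q.2.2
    exact h2.unique (h3.congr_of_eventuallyEq h4)
  obtain ⟨hS, hv, hneg, hlow⟩ := hdiff q hq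
  set L := fderiv ℝ f q with hL
  have hexp : L (X, p, r) = (∑ i, ∑ j, L (Pi.single i (Pi.single j (1:ℝ)), 0, 0) * X i j)
      + (∑ i, L (0, Pi.single i (1:ℝ), 0) * p i) + L (0, 0, 1) * r := by
    have e1 : (X, p, r) = (∑ i, ∑ j, X i j •
        ((Pi.single i (Pi.single j (1:ℝ)), 0, 0) : (Fin d → Fin d → ℝ) × (Fin d → ℝ) × ℝ))
        + (∑ i, p i • ((0, Pi.single i (1:ℝ), 0) : (Fin d → Fin d → ℝ) × (Fin d → ℝ) × ℝ))
        + r • ((0, 0, 1) : (Fin d → Fin d → ℝ) × (Fin d → ℝ) × ℝ) := by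
      refine Prod.ext ?_ (Prod.ext ?_ ?_)
      · simp only [Prod.fst_add, Prod.fst_sum, Prod.smul_fst]
        ext i j
        simp [Finset.sum_apply, Pi.single_apply]
      · simp only [Prod.snd_add, Prod.snd_sum, Prod.smul_snd, Prod.fst_add, Prod.fst_sum, Prod.smul_fst]
        ext i
        simp [Finset.sum_apply, Pi.single_apply]
      · simp [Prod.snd_sum]
    conv_lhs => rw [e1]
    simp only [map_add, map_sum, map_smul, smul_eq_mul]
    congr 1
    · congr 1
      · exact Finset.sum_congr rfl fun _ _ => Finset.sum_congr rfl fun _ _ => mul_comm _ _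
      · exact Finset.sum_congr rfl fun _ _ => mul_comm _ _
    · exact mul_comm _ _
  have h1 := trace_le hδ hc hS X hX
  have h2 := (le_abs_self _).trans (cs_vec (fun i => L (0, Pi.single i (1:ℝ), 0)) p)
  have h3 : L (0, 0, 1) * r ≤ K1 * |r| := by
    have : |L (0, 0, 1)| ≤ K1 := abs_le.mpr ⟨hlow, by linarith⟩
    calc _ ≤ |L (0, 0, 1) * r| := le_abs_self _
      _ = |L (0, 0, 1)| * |r| := abs_mul _ _
      _ ≤ _ := by gcongr
  have h4 := mul_le_mul_of_nonneg_right hv (vecNorm_nonneg p)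
  have h5 : L q - L (X, p, r) ≤ C * dist (X, p, r) q := by
    rw [← map_sub]
    refine (le_abs_self _).trans ((L.le_opNorm _).trans ?_)
    rw [dist_comm, dist_eq_norm]
    gcongr
  have h6 : f (X, p, r) - f q ≤ C * dist (X, p, r) q :=
    (le_abs_self _).trans (hC.dist_le_mul _ _)
  have h7 : 2 * C * dist (X, p, r) q ≤ e := by
    have : (2 * C + 1 : ℝ) * dist (X, p, r) q ≤ e := by
      rw [mul_comm, ← le_div_iff₀ (by positivity)]; exact hqd.le
    nlinarith [dist_nonneg (x := (X, p, r)) (y := q)]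
  change f (X, p, r) ≤ _
  linarith


lemma abs_entry_le {d : ℕ} (m : Fin d → Fin d → ℝ) (i j : Fin d) : |m i j| ≤ matNorm m := by
  refine Real.abs_le_sqrt ?_
  calc m i j ^ 2 ≤ ∑ j, m i j ^ 2 :=
        Finset.single_le_sum (f := fun j => m i j ^ 2) (fun _ _ => sq_nonneg _) (Finset.mem_univ j)
    _ ≤ _ := Finset.single_le_sum (f := fun i => ∑ j, m i j ^ 2)
        (fun _ _ => Finset.sum_nonneg fun _ _ => sq_nonneg _) (Finset.mem_univ i)

lemma Lop_bdd {d : ℕ} {A B : Type} [MetricSpace A] [MetricSpace B] {δ K0 γ : ℝ} {ω : ℝ → ℝ}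
    {a : A → B → E d → Fin d → Fin d → ℝ} {b : A → B → E d → Fin d → ℝ}
    {c f : A → B → E d → ℝ} (h : CoeffAssump δ K0 γ ω a b c f) (u : E d → ℝ) (x : E d) :
    ∃ C : ℝ, ∀ α β, |Lop a b c α β u x + f α β x| ≤ C := by
  obtain ⟨-, ha, hb, hc, hf, -⟩ := h
  refine ⟨(∑ i, ∑ j, K0 * |D2 u x i j|) + K0 * vecNorm (fun i => D1 u x i) + K0 * |u x| + K0,
    fun α β => ?_⟩
  have h1 : |∑ i, ∑ j, a α β x i j * D2 u x i j| ≤ ∑ i, ∑ j, K0 * |D2 u x i j| := by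
    refine (Finset.abs_sum_le_sum_abs _ _).trans (Finset.sum_le_sum fun i _ => ?_)
    refine (Finset.abs_sum_le_sum_abs _ _).trans (Finset.sum_le_sum fun j _ => ?_)
    rw [abs_mul]
    exact mul_le_mul_of_nonneg_right ((abs_entry_le _ i j).trans (ha α β x)) (abs_nonneg _)
  have h2 : |∑ i, b α β x i * D1 u x i| ≤ K0 * vecNorm (fun i => D1 u x i) :=
    (cs_vec _ _).trans (mul_le_mul_of_nonneg_right (hb α β x) (vecNorm_nonneg _))
  have h3 : |c α β x * u x| ≤ K0 * |u x| := by
    rw [abs_mul, abs_of_nonneg (hc α β x).1]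
    exact mul_le_mul_of_nonneg_right (hc α β x).2 (abs_nonneg _)
  have h4 := hf α β x
  unfold Lop
  rw [abs_le] at *
  constructor <;> linarith [h1.1, h1.2, h2.1, h2.2, h3.1, h3.2, h4.1, h4.2]

lemma isaacs_pair {d : ℕ} {A B : Type} [MetricSpace A] [MetricSpace B] {δ K0 γ : ℝ} {ω : ℝ → ℝ}
    {a : A → B → E d → Fin d → Fin d → ℝ} {b : A → B → E d → Fin d → ℝ}
    {c f : A → B → E d → ℝ} (hA : Nonempty A) (hB : Nonempty B)
    (h : CoeffAssump δ K0 γ ω a b c f) (u v : E d → ℝ) (x y : E d) {θ : ℝ} (hθ : 0 < θ)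
    (hu : 0 ≤ Fop a b c f u x) (hv : Fop a b c f v y ≤ 0) :
    ∃ α β, -θ < Lop a b c α β u x + f α β x ∧ Lop a b c α β v y + f α β y < θ := by
  obtain ⟨Cu, hCu⟩ := Lop_bdd h u x
  obtain ⟨Cv, hCv⟩ := Lop_bdd h v y
  obtain ⟨α, hα⟩ := exists_lt_of_lt_ciSup (show -θ < ⨆ α : A, ⨅ β : B, (Lop a b c α β u x + f α β x)
    from lt_of_lt_of_le (by linarith) hu)
  have hbd : BddAbove (Set.range fun α : A => ⨅ β : B, (Lop a b c α β v y + f α β y)) := by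
    refine ⟨Cv, ?_⟩
    rintro _ ⟨α', rfl⟩
    obtain ⟨β⟩ := hB
    refine (ciInf_le (f := fun β : B => (Lop a b c α' β v y + f α' β y)) ⟨-Cv, ?_⟩ β).trans
      (abs_le.mp (hCv α' β)).2
    rintro _ ⟨β', rfl⟩
    exact (abs_le.mp (hCv α' β')).1
  have h1 : ⨅ β : B, (Lop a b c α β v y + f α β y) < θ :=
    lt_of_le_of_lt (le_ciSup hbd α) (lt_of_le_of_lt hv hθ)
  obtain ⟨β, hβ⟩ := exists_lt_of_ciInf_lt h1
  refine ⟨α, β, lt_of_lt_of_le hα ?_, hβ⟩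
  refine ciInf_le (f := fun β : B => (Lop a b c α β u x + f α β x)) ⟨-Cu, ?_⟩ β
  rintro _ ⟨β', rfl⟩
  exact (abs_le.mp (hCu α β')).1

lemma sum_sq_norm {d : ℕ} (x y : E d) : ∑ i, (x i - y i) ^ 2 = ‖x - y‖ ^ 2 := by
  rw [← vecNorm_eq, vecNorm_sq]; rfl

lemma doubling {d : ℕ} {G : Set (E d)} (hG : IsOpen G) {u v : E d → ℝ}
    (hu : ContDiffOn ℝ 2 u (closure G)) (hv : ContDiffOn ℝ 2 v (closure G))
    {χ M ρ κ μ w lam : ℝ} (z : E d) (k : Fin d) {x0 : E d} (hx0 : x0 ∈ G)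
    (hball : Metric.closedBall x0 ρ ⊆ G) (hHv : HolderBound χ G v M) (hχ : 0 < χ) (hM : 0 ≤ M)
    (hmax : ∀ x ∈ G, u x - v x + w * Real.exp (lam * (x k - z k)) ≤
      u x0 - v x0 + w * Real.exp (lam * (x0 k - z k)))
    (hρ : 0 < ρ) (hκ : 0 < κ) (hμ : 0 < μ)
    (hi : (M * ρ ^ χ) ^ 2 ≤ κ * μ * ρ ^ 2) (hii : 2 * (M * ρ ^ χ) < κ * ρ) :
    ∃ x ∈ G, ∃ y ∈ G, ‖x - y‖ ≤ M * ρ ^ χ / κ ∧ ‖x - x0‖ ≤ ρ ∧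
      (∀ j, D1 u x j = D1 v y j + 2 * μ * (x j - x0 j) -
        (if j = k then w * lam * Real.exp (lam * (x k - z k)) else 0)) ∧
      (∀ ξ ζ : Fin d → ℝ, (∑ i, ∑ j, D2 u x i j * ξ i * ξ j)
        + w * lam ^ 2 * Real.exp (lam * (x k - z k)) * ξ k ^ 2 - 2 * μ * ∑ i, ξ i ^ 2
        - (∑ i, ∑ j, D2 v y i j * ζ i * ζ j) ≤ 2 * κ * ∑ i, (ξ i - ζ i) ^ 2) ∧
      u x0 - v x0 + w * Real.exp (lam * (x0 k - z k)) - M * ‖x - y‖ ≤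
        u x - v y + w * Real.exp (lam * (x k - z k)) := by
  have hCu : ∀ x ∈ G, ContDiffAt ℝ 2 u x := fun x hx =>
    hu.contDiffAt (mem_of_superset (hG.mem_nhds hx) subset_closure)
  have hCv : ∀ x ∈ G, ContDiffAt ℝ 2 v x := fun x hx =>
    hv.contDiffAt (mem_of_superset (hG.mem_nhds hx) subset_closure)
  set p := fderiv ℝ v x0 with hp
  set T := M * ρ ^ χ with hT
  have hT0 : 0 ≤ T := by positivity
  set W : E d × E d → ℝ := fun q => u q.1 + w * Real.exp (lam * (q.1 k - z k))
    - μ * (∑ i, (q.1 i - x0 i) ^ 2) - v q.2 - p (q.1 - q.2) - κ * ∑ i, (q.1 i - q.2 i) ^ 2 with hW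
  set Bx := Metric.closedBall x0 ρ with hBx
  have hucont : ContinuousOn u Bx := fun x hx => (hCu x (hball hx)).continuousAt.continuousWithinAt
  have hvcont : ContinuousOn v Bx := fun x hx => (hCv x (hball hx)).continuousAt.continuousWithinAt
  have hWc : ContinuousOn W (Bx ×ˢ Bx) := by
    have c1 : ContinuousOn (fun q : E d × E d => u q.1) (Bx ×ˢ Bx) :=
      hucont.comp continuousOn_fst (fun q hq => hq.1)
    have c2 : ContinuousOn (fun q : E d × E d => v q.2) (Bx ×ˢ Bx) :=
      hvcont.comp continuousOn_snd (fun q hq => hq.2)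
    have c3 : Continuous (fun q : E d × E d => w * Real.exp (lam * (q.1 k - z k))) := by fun_prop
    have c4 : Continuous (fun q : E d × E d => μ * (∑ i, (q.1 i - x0 i) ^ 2)) := by fun_prop
    have c5 : Continuous (fun q : E d × E d => p (q.1 - q.2)) := by fun_prop
    have c6 : Continuous (fun q : E d × E d => κ * ∑ i, (q.1 i - q.2 i) ^ 2) := by fun_prop
    exact ((((c1.add c3.continuousOn).sub c4.continuousOn).sub c2).sub c5.continuousOn).sub
      c6.continuousOn
  have hx0B : x0 ∈ Bx := Metric.mem_closedBall_self hρ.le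
  obtain ⟨⟨x, y⟩, ⟨hxB, hyB⟩, hqmax⟩ := ((isCompact_closedBall x0 ρ).prod
    (isCompact_closedBall x0 ρ)).exists_isMaxOn ⟨(x0, x0), hx0B, hx0B⟩ hWc
  simp only at hxB hyB
  have hcmp : W (x0, x0) ≤ W (x, y) := hqmax ⟨hx0B, hx0B⟩
  simp only [hW, sum_sq_norm, sub_self, norm_zero, map_zero] at hcmp
  have hmv : |v x - v y - p (x - y)| ≤ T * ‖x - y‖ := by
    refine Convex.norm_image_sub_le_of_norm_fderiv_le' (𝕜 := ℝ) (s := Bx)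
      (fun x' hx' => hHv.1 x' (hball hx')) (fun x' hx' => ?_) (convex_closedBall x0 ρ) hyB hxB
    refine (opNorm_le_vecNorm _).trans ?_
    refine (hHv.2.2.2 x' (hball hx') x0 hx0).trans ?_
    refine mul_le_mul_of_nonneg_left ?_ hM
    exact Real.rpow_le_rpow (norm_nonneg _) (mem_closedBall_iff_norm.mp hx') hχ.le
  have hpb : |p (x - y)| ≤ M * ‖x - y‖ := by
    refine (p.le_opNorm _).trans (mul_le_mul_of_nonneg_right ?_ (norm_nonneg _))
    refine norm_fderiv_le_of_lip' ℝ hM ?_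
    filter_upwards [hG.mem_nhds hx0] with x' hx' using hHv.2.2.1 x' hx' x0 hx0
  have hmx := hmax x (hball hxB)
  set n := ‖x - y‖ with hn
  set h := ‖x - x0‖ with hh
  have hn0 : 0 ≤ n := norm_nonneg _
  have hh0 : 0 ≤ h := norm_nonneg _
  have hkey : μ * h ^ 2 + κ * n ^ 2 ≤ T * n := by
    have := (abs_le.mp hmv).2
    nlinarith
  have hn1 : n ≤ T / κ := by
    rw [le_div_iff₀ hκ]
    rcases hn0.eq_or_lt with h0 | h0
    · rw [← h0]; simpa using hT0
    · have : 0 ≤ μ * h ^ 2 := by positivity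
      have h2 : κ * n * n ≤ T * n := by nlinarith
      have := le_of_mul_le_mul_right h2 h0
      linarith
  have hh1 : h ≤ ρ / 2 := by
    have h2 : κ * (μ * h ^ 2) ≤ T ^ 2 / 4 := by nlinarith [sq_nonneg (T / 2 - κ * n)]
    have h3 : κ * μ * h ^ 2 ≤ κ * μ * (ρ / 2) ^ 2 := by nlinarith
    have h4 := le_of_mul_le_mul_left h3 (by positivity)
    exact abs_le_of_sq_le_sq' h4 (by positivity) |>.2
  have hn2 : n < ρ / 2 := by
    refine lt_of_le_of_lt hn1 ?_
    rw [div_lt_iff₀ hκ]; linarith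
  have hxb : x ∈ Metric.ball x0 ρ := by
    rw [mem_ball_iff_norm]; linarith
  have hyb : y ∈ Metric.ball x0 ρ := by
    rw [mem_ball_iff_norm]
    have : ‖y - x0‖ ≤ ‖y - x‖ + ‖x - x0‖ := norm_sub_le_norm_sub_add_norm_sub _ _ _
    rw [norm_sub_rev y x] at this
    linarith
  have hxG := hball hxB
  have hyG := hball hyB
  have htest : ∀ ξ ζ : Fin d → ℝ, ((∑ j, ξ j * D1 u x j) + w * lam * Real.exp (lam * (x k - z k)) * ξ k
      - 2 * μ * (∑ i, (x i - x0 i) * ξ i) - (∑ j, ζ j * D1 v y j)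
      - p (WithLp.toLp 2 ξ - WithLp.toLp 2 ζ) - 2 * κ * ∑ i, (x i - y i) * (ξ i - ζ i) = 0) ∧
      ((∑ i, ∑ j, D2 u x i j * ξ i * ξ j)
        + w * lam ^ 2 * Real.exp (lam * (x k - z k)) * ξ k ^ 2 - 2 * μ * ∑ i, ξ i ^ 2
        - (∑ i, ∑ j, D2 v y i j * ζ i * ζ j) - 2 * κ * ∑ i, (ξ i - ζ i) ^ 2 ≤ 0) := by
    intro ξ ζ
    set g : ℝ → ℝ := fun t => W (x + t • WithLp.toLp 2 ξ, y + t • WithLp.toLp 2 ζ) with hg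
    set g' : ℝ → ℝ := fun t => (∑ j, ξ j * D1 u (x + t • WithLp.toLp 2 ξ) j)
      + w * lam * Real.exp (lam * (x k + t * ξ k - z k)) * ξ k
      - 2 * μ * (∑ i, (x i + t * ξ i - x0 i) * ξ i) - (∑ j, ζ j * D1 v (y + t • WithLp.toLp 2 ζ) j)
      - p (WithLp.toLp 2 ξ - WithLp.toLp 2 ζ)
      - 2 * κ * ∑ i, (x i + t * ξ i - (y i + t * ζ i)) * (ξ i - ζ i) with hg'
    have hlmax : IsLocalMax g 0 := by
      have t1 : Tendsto (fun t : ℝ => x + t • (WithLp.toLp 2 ξ : E d)) (𝓝 0) (𝓝 x) := by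
        have : Continuous (fun t : ℝ => x + t • (WithLp.toLp 2 ξ : E d)) := by fun_prop
        simpa using this.tendsto 0
      have t2 : Tendsto (fun t : ℝ => y + t • (WithLp.toLp 2 ζ : E d)) (𝓝 0) (𝓝 y) := by
        have : Continuous (fun t : ℝ => y + t • (WithLp.toLp 2 ζ : E d)) := by fun_prop
        simpa using this.tendsto 0
      filter_upwards [t1.eventually (Metric.isOpen_ball.mem_nhds hxb),
        t2.eventually (Metric.isOpen_ball.mem_nhds hyb)] with t ht1 ht2
      have := hqmax (show (x + t • WithLp.toLp 2 ξ, y + t • WithLp.toLp 2 ζ) ∈ Bx ×ˢ Bx from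
        ⟨Metric.ball_subset_closedBall ht1, Metric.ball_subset_closedBall ht2⟩)
      simpa [hg] using this
    have hd1 : ∀ᶠ t in 𝓝 (0:ℝ), HasDerivAt g (g' t) t := by
      filter_upwards [line_deriv1 (hCu x hxG) ξ, line_deriv1 (hCv y hyG) ζ] with t ht1 ht2
      have e1 : HasDerivAt (fun t : ℝ => w * Real.exp (lam * (x k + t * ξ k - z k)))
          (w * lam * Real.exp (lam * (x k + t * ξ k - z k)) * ξ k) t := by
        have : HasDerivAt (fun t : ℝ => lam * (x k + t * ξ k - z k)) (lam * ξ k) t := by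
          simpa using ((((hasDerivAt_id t).mul_const (ξ k)).const_add (x k)).sub_const (z k)).const_mul lam
        have := (this.exp).const_mul w
        exact this.congr_deriv (by ring)
      have e2 : HasDerivAt (fun t : ℝ => μ * ∑ i, (x i + t * ξ i - x0 i) ^ 2)
          (2 * μ * (∑ i, (x i + t * ξ i - x0 i) * ξ i)) t := by
        have : ∀ i, HasDerivAt (fun t : ℝ => (x i + t * ξ i - x0 i) ^ 2)
            (2 * ((x i + t * ξ i - x0 i) * ξ i)) t := by
          intro i
          have h0 : HasDerivAt (fun t : ℝ => x i + t * ξ i - x0 i) (ξ i) t := by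
            simpa using (((hasDerivAt_id t).mul_const (ξ i)).const_add (x i)).sub_const (x0 i)
          exact (h0.fun_pow 2).congr_deriv (by norm_num; ring)
        have := (HasDerivAt.fun_sum (u := Finset.univ) fun i _ => this i).const_mul μ
        exact this.congr_deriv (by rw [← Finset.mul_sum]; ring)
      have e3 : HasDerivAt (fun t : ℝ => κ * ∑ i, (x i + t * ξ i - (y i + t * ζ i)) ^ 2)
          (2 * κ * (∑ i, (x i + t * ξ i - (y i + t * ζ i)) * (ξ i - ζ i))) t := by
        have : ∀ i, HasDerivAt (fun t : ℝ => (x i + t * ξ i - (y i + t * ζ i)) ^ 2)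
            (2 * ((x i + t * ξ i - (y i + t * ζ i)) * (ξ i - ζ i))) t := by
          intro i
          have h0 : HasDerivAt (fun t : ℝ => x i + t * ξ i - (y i + t * ζ i)) (ξ i - ζ i) t := by
            simpa using (((hasDerivAt_id t).mul_const (ξ i)).const_add (x i)).fun_sub
              (((hasDerivAt_id t).mul_const (ζ i)).const_add (y i))
          exact (h0.fun_pow 2).congr_deriv (by norm_num; ring)
        have := (HasDerivAt.fun_sum (u := Finset.univ) fun i _ => this i).const_mul κ
        exact this.congr_deriv (by rw [← Finset.mul_sum]; ring)
      have e4 : HasDerivAt (fun t : ℝ => p (x + t • WithLp.toLp 2 ξ - (y + t • WithLp.toLp 2 ζ)))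
          (p (WithLp.toLp 2 ξ - WithLp.toLp 2 ζ)) t := by
        refine p.hasFDerivAt.comp_hasDerivAt t ?_
        simpa using (((hasDerivAt_id t).smul_const (WithLp.toLp 2 ξ : E d)).const_add x).fun_sub
          (((hasDerivAt_id t).smul_const (WithLp.toLp 2 ζ : E d)).const_add y)
      exact ((((ht1.add e1).sub e2).sub ht2).sub e4).sub e3
    have hd2 : HasDerivAt g' ((∑ i, ∑ j, D2 u x i j * ξ i * ξ j)
        + w * lam ^ 2 * Real.exp (lam * (x k - z k)) * ξ k ^ 2 - 2 * μ * ∑ i, ξ i ^ 2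
        - (∑ i, ∑ j, D2 v y i j * ζ i * ζ j) - 2 * κ * ∑ i, (ξ i - ζ i) ^ 2) 0 := by
      have e1 : HasDerivAt (fun t : ℝ => w * lam * Real.exp (lam * (x k + t * ξ k - z k)) * ξ k)
          (w * lam ^ 2 * Real.exp (lam * (x k - z k)) * ξ k ^ 2) 0 := by
        have : HasDerivAt (fun t : ℝ => lam * (x k + t * ξ k - z k)) (lam * ξ k) 0 := by
          simpa using ((((hasDerivAt_id (0:ℝ)).mul_const (ξ k)).const_add (x k)).sub_const (z k)).const_mul lam
        have := ((this.exp).const_mul (w * lam)).mul_const (ξ k)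
        exact this.congr_deriv (by simp only [zero_mul, add_zero]; ring)
      have e2 : HasDerivAt (fun t : ℝ => 2 * μ * (∑ i, (x i + t * ξ i - x0 i) * ξ i))
          (2 * μ * (∑ i, ξ i ^ 2)) 0 := by
        have : ∀ i, HasDerivAt (fun t : ℝ => (x i + t * ξ i - x0 i) * ξ i) (ξ i ^ 2) 0 := by
          intro i
          have h0 : HasDerivAt (fun t : ℝ => x i + t * ξ i - x0 i) (ξ i) 0 := by
            simpa using (((hasDerivAt_id (0:ℝ)).mul_const (ξ i)).const_add (x i)).sub_const (x0 i)
          exact (h0.mul_const _).congr_deriv (by ring)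
        exact (HasDerivAt.fun_sum (u := Finset.univ) fun i _ => this i).const_mul _
      have e3 : HasDerivAt (fun t : ℝ => 2 * κ * ∑ i, (x i + t * ξ i - (y i + t * ζ i)) * (ξ i - ζ i))
          (2 * κ * (∑ i, (ξ i - ζ i) ^ 2)) 0 := by
        have : ∀ i, HasDerivAt (fun t : ℝ => (x i + t * ξ i - (y i + t * ζ i)) * (ξ i - ζ i))
            ((ξ i - ζ i) ^ 2) 0 := by
          intro i
          have h0 : HasDerivAt (fun t : ℝ => x i + t * ξ i - (y i + t * ζ i)) (ξ i - ζ i) 0 := by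
            simpa using (((hasDerivAt_id (0:ℝ)).mul_const (ξ i)).const_add (x i)).fun_sub
              (((hasDerivAt_id (0:ℝ)).mul_const (ζ i)).const_add (y i))
          exact (h0.mul_const _).congr_deriv (by ring)
        exact (HasDerivAt.fun_sum (u := Finset.univ) fun i _ => this i).const_mul _
      exact ((((line_deriv2 (hCu x hxG) ξ).add e1).sub e2).sub
        (line_deriv2 (hCv y hyG) ζ)).sub_const _ |>.sub e3
    obtain ⟨r1, r2⟩ := second_test hd1 hd2 hlmax
    refine ⟨?_, r2⟩
    simpa [hg'] using r1
  refine ⟨x, hxG, y, hyG, hn1, by linarith, fun j => ?_, fun ξ ζ => ?_, ?_⟩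
  · have := (htest (Pi.single j 1) (Pi.single j 1)).1
    simp only [Pi.single_apply, ite_mul, one_mul, zero_mul, Finset.sum_ite_eq', Finset.mem_univ,
      if_true, mul_ite, mul_one, mul_zero, sub_self, Finset.sum_const_zero, map_zero, sub_zero] at this
    by_cases hjk : j = k
    · subst hjk; simp only [if_true] at this ⊢; linarith
    · rw [if_neg (Ne.symm hjk)] at this; rw [if_neg hjk]; linarith
  · linarith [(htest ξ ζ).2]
  · have e1 := (abs_le.mp hpb).1
    have e2 : 0 ≤ μ * h ^ 2 := by positivity
    have e3 : 0 ≤ κ * n ^ 2 := by positivity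
    nlinarith


lemma psd_le_trace {d : ℕ} (Z : Fin d → Fin d → ℝ)
    (hZ : ∀ ξ : Fin d → ℝ, 0 ≤ ∑ i, ∑ j, Z i j * ξ i * ξ j) (ξ : Fin d → ℝ) :
    ∑ i, ∑ j, Z i j * ξ i * ξ j ≤ (∑ i, Z i i) * ∑ i, ξ i ^ 2 := by
  obtain ⟨s, hs⟩ : ∃ s : ℝ, s = ∑ i, ξ i ^ 2 := ⟨_, rfl⟩
  rw [← hs]
  have := psd_pair (fun i j => (if i = j then s else 0) - ξ i * ξ j) Z
    (by intro i j; simp only [eq_comm, mul_comm]) (by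
      intro ζ
      have e0 : (∑ i, ξ i * ζ i) ^ 2 = ∑ i, ∑ j, ξ i * ξ j * ζ i * ζ j := by
        rw [pow_two, Finset.sum_mul_sum]
        exact Finset.sum_congr rfl fun _ _ => Finset.sum_congr rfl fun _ _ => by ring
      have e : ∑ i, ∑ j, ((if i = j then s else 0) - ξ i * ξ j) * ζ i * ζ j
          = s * ∑ i, ζ i ^ 2 - (∑ i, ξ i * ζ i) ^ 2 := by
        simp only [sub_mul, Finset.sum_sub_distrib, ite_mul, zero_mul, Finset.sum_ite_eq,
          Finset.mem_univ, if_true]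
        rw [e0, Finset.mul_sum]
        congr 1
        exact Finset.sum_congr rfl fun _ _ => by ring
      rw [e, sub_nonneg, hs]
      exact Finset.sum_mul_sq_le_sq_mul_sq _ _ _) hZ
  simp only [sub_mul, Finset.sum_sub_distrib, ite_mul, zero_mul, Finset.sum_ite_eq,
    Finset.mem_univ, if_true] at this
  rw [← Finset.mul_sum] at this
  have e2 : ∑ i, ∑ j, ξ i * ξ j * Z i j = ∑ i, ∑ j, Z i j * ξ i * ξ j :=
    Finset.sum_congr rfl fun _ _ => Finset.sum_congr rfl fun _ _ => by ring
  rw [e2] at this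
  linarith

lemma Y_upper {d : ℕ} {δ κ H : ℝ} (hδ : 0 < δ) (hκ : 0 < κ) {m : Fin d → Fin d → ℝ}
    (hm : memSdelta δ m) (Y : Fin d → Fin d → ℝ)
    (hY : ∀ ζ : Fin d → ℝ, -(∑ i, ∑ j, Y i j * ζ i * ζ j) ≤ 2 * κ * ∑ i, ζ i ^ 2)
    (hH : ∑ i, ∑ j, m i j * Y i j ≤ H) (ξ : Fin d → ℝ) :
    ∑ i, ∑ j, Y i j * ξ i * ξ j ≤ δ⁻¹ * (H + 2 * κ * (d * δ⁻¹)) * ∑ i, ξ i ^ 2 := by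
  obtain ⟨Z, hZd⟩ : ∃ Z : Fin d → Fin d → ℝ,
    Z = fun i j => Y i j + if i = j then 2 * κ else 0 := ⟨_, rfl⟩
  have e : ∀ ζ : Fin d → ℝ, ∑ i, ∑ j, Z i j * ζ i * ζ j =
      ∑ i, ∑ j, Y i j * ζ i * ζ j + 2 * κ * ∑ i, ζ i ^ 2 := by
    intro ζ
    simp only [hZd, add_mul, Finset.sum_add_distrib, ite_mul, zero_mul, Finset.sum_ite_eq,
      Finset.mem_univ, if_true]
    rw [Finset.mul_sum]
    congr 1
    exact Finset.sum_congr rfl fun _ _ => by ring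
  have hZ : ∀ ζ : Fin d → ℝ, 0 ≤ ∑ i, ∑ j, Z i j * ζ i * ζ j := by
    intro ζ; rw [e]; linarith [hY ζ]
  have h1 := psd_le_trace _ hZ ξ
  have h2 := trace_lower hm _ hZ
  have h3 : ∑ i, ∑ j, m i j * Z i j =
      ∑ i, ∑ j, m i j * Y i j + 2 * κ * ∑ i, m i i := by
    simp only [hZd, mul_add, Finset.sum_add_distrib, mul_ite, mul_zero, Finset.sum_ite_eq,
      Finset.mem_univ, if_true]
    rw [← Finset.sum_mul]; ring
  rw [h3] at h2
  rw [e] at h1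
  have h4 := mul_le_mul_of_nonneg_left (trace_upper hm) (show 0 ≤ 2 * κ by positivity)
  have h5 : ∑ i, Z i i ≤ δ⁻¹ * (H + 2 * κ * (d * δ⁻¹)) := by
    rw [inv_mul_eq_div, le_div_iff₀ hδ]; linarith
  have h0 : 0 ≤ ∑ i, ξ i ^ 2 := Finset.sum_nonneg fun _ _ => sq_nonneg _
  have h6 := mul_le_mul_of_nonneg_right h5 h0
  have h7 : 0 ≤ 2 * κ * ∑ i, ξ i ^ 2 := by positivity
  linarith

set_option maxHeartbeats 2000000 in
lemma main_estimate {d : ℕ} (k : Fin d) {δ K0 χ γ δhat K1 : ℝ}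
    {P : (Fin d → Fin d → ℝ) → (Fin d → ℝ) → ℝ → ℝ}
    (hδ0 : 0 < δ) (hK0 : 0 ≤ K0) (hχ0 : 0 < χ) (hγ0 : 0 ≤ γ)
    (hδhat0 : 0 < δhat) (hK1 : K0 ≤ K1) (hP : PAssump δhat K1 P)
    {D lam : ℝ} (hlam : lam = (K0 + 1) / δ)
    {A B : Type} [MetricSpace A] [MetricSpace B]
    {ω : ℝ → ℝ} {a : A → B → E d → Fin d → Fin d → ℝ}
    {b : A → B → E d → Fin d → ℝ} {c f : A → B → E d → ℝ}
    {G : Set (E d)} {u v : E d → ℝ} {K M : ℝ}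
    (hA : Nonempty A) (hB : Nonempty B)
    (hω : MonotoneOn ω (Set.Ici 0)) (hω0 : ω 0 = 0) (hC : CoeffAssump δ K0 γ ω a b c f)
    (hG : IsOpen G) (hGne : G.Nonempty) (hGb : Bornology.IsBounded G) (hdiam : Metric.diam G ≤ D)
    (hu : ContDiffOn ℝ 2 u (closure G)) (hv : ContDiffOn ℝ 2 v (closure G))
    (hequ : ∀ x ∈ G, 0 ≤ max (Fop a b c f u x) (Pop P u x - K))
    (heqv : ∀ x ∈ G, min (Fop a b c f v x) (-(Pop P (fun y => -(v y)) x) + K) ≤ 0)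
    (hbd : ∀ x ∈ frontier G, u x ≤ v x)
    (hM : 1 ≤ M) (hHu : HolderBound χ G u M) (hHv : HolderBound χ G v M)
    {κ μ ρ t0 ε : ℝ} (hκ : 0 < κ) (hμ : 0 < μ) (hρ : 0 < ρ) (hρ1 : ρ ≤ 1)
    (hPK : (2 * κ + 2 * μ) * (d * δhat⁻¹) + K1 * M + K1 * M < K)
    (hi : (M * ρ ^ χ) ^ 2 ≤ κ * μ * ρ ^ 2) (hii : 2 * (M * ρ ^ χ) < κ * ρ)
    (hiii : 2 * M * ρ ≤ ε) (hiv : M * ρ ^ χ / κ ≤ t0)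
    (hErr : (δ⁻¹ * (1 + 3 * K0 * M + 2 * κ * (d * δ⁻¹)) + 2 * κ) / (4 * δ) *
        (K0 * (M * ρ ^ χ / κ) ^ γ) ^ 2 + 2 * μ * (d * δ⁻¹ + K0)
        + K0 * M * t0 + 3 * (K0 * M * ω t0) < ε) :
    ∀ x ∈ G, u x - v x ≤ ε * (1 + Real.exp (2 * lam * D) / lam) := by
  have hlam0 : 0 < lam := by rw [hlam]; positivity
  have hM0 : 0 < M := by linarith
  have hε : 0 < ε := lt_of_lt_of_le (by positivity) hiii
  have hK1' : 0 ≤ K1 := hK0.trans hK1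
  obtain ⟨z, hz⟩ := hGne
  have hcoord : ∀ x ∈ closure G, |x k - z k| ≤ D := by
    intro x hx
    have h1 : |x k - z k| ≤ ‖x - z‖ := PiLp.norm_apply_le (x - z) k
    rw [← dist_eq_norm] at h1
    have h2 := Metric.dist_le_diam_of_mem hGb.closure hx (subset_closure hz)
    rw [Metric.diam_closure] at h2
    linarith
  set B0 := Real.exp (lam * D) / lam with hB0
  have hB0p : 0 < B0 := by positivity
  set w := ε * B0 with hw
  have hwp : 0 < w := by positivity
  have hexp_le : ∀ x ∈ closure G, w * Real.exp (lam * (x k - z k)) ≤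
      ε * (Real.exp (2 * lam * D) / lam) := by
    intro x hx
    have h1 := (abs_le.mp (hcoord x hx)).2
    have h2 : Real.exp (lam * (x k - z k)) ≤ Real.exp (lam * D) := by
      apply Real.exp_le_exp.mpr; gcongr
    have h3 : Real.exp (2 * lam * D) = Real.exp (lam * D) * Real.exp (lam * D) := by
      rw [← Real.exp_add]; congr 1; ring
    rw [h3, hw, hB0, mul_assoc]
    refine mul_le_mul_of_nonneg_left ?_ hε.le
    rw [div_mul_eq_mul_div]
    gcongr
  have hexp_ge : ∀ x ∈ closure G, ε ≤ w * lam * Real.exp (lam * (x k - z k)) := by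
    intro x hx
    have h1 := (abs_le.mp (hcoord x hx)).1
    have h2 : Real.exp (-(lam * D)) ≤ Real.exp (lam * (x k - z k)) := by
      apply Real.exp_le_exp.mpr; nlinarith
    have h3 : w * lam * Real.exp (-(lam * D)) = ε := by
      rw [hw, hB0, Real.exp_neg]; field_simp
    calc ε = w * lam * Real.exp (-(lam * D)) := h3.symm
      _ ≤ _ := by gcongr
  have hcu := hu.continuousOn
  have hcv := hv.continuousOn
  have hcΦ : ContinuousOn (fun x : E d => u x - v x + w * Real.exp (lam * (x k - z k))) (closure G) := by
    refine (hcu.sub hcv).add (Continuous.continuousOn ?_)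
    fun_prop
  obtain ⟨x0, hx0, hx0max⟩ := hGb.isCompact_closure.exists_isMaxOn ⟨z, subset_closure hz⟩ hcΦ
  have hx0max' : ∀ x ∈ closure G, u x - v x + w * Real.exp (lam * (x k - z k)) ≤
      u x0 - v x0 + w * Real.exp (lam * (x0 k - z k)) := fun x hx => hx0max hx
  by_contra hcon
  push Not at hcon
  obtain ⟨x1, hx1, hx1'⟩ := hcon
  have hbig : ε < u x0 - v x0 := by
    have h1 := hx0max' x1 (subset_closure hx1)
    have h2 := hexp_le x0 hx0
    have h3 : 0 < w * Real.exp (lam * (x1 k - z k)) := by positivity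
    linarith
  have hx0G : x0 ∈ G := by
    by_contra hn
    have : x0 ∈ frontier G := by
      rw [hG.frontier_eq]; exact ⟨hx0, hn⟩
    linarith [hbd x0 this]
  have hlip : ∀ g : E d → ℝ, ContinuousOn g (closure G) → HolderBound χ G g M →
      ∀ y ∈ closure G, |g x0 - g y| ≤ M * ‖x0 - y‖ := by
    intro g hg hH y hy
    refine ContinuousWithinAt.closure_le (s := G) (f := fun y => |g x0 - g y|)
      (g := fun y => M * ‖x0 - y‖) hy ?_ ?_ (fun y hy => hH.2.2.1 x0 hx0G y hy)
    · exact (continuousWithinAt_const.sub ((hg y hy).mono subset_closure)).abs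
    · exact Continuous.continuousWithinAt (by fun_prop)
  have hball : Metric.closedBall x0 ρ ⊆ G := by
    refine (convex_closedBall x0 ρ).isPreconnected.subset_of_closure_inter_subset hG
      ⟨x0, Metric.mem_closedBall_self hρ.le, hx0G⟩ ?_
    rintro y ⟨hyc, hyb⟩
    by_contra hn
    have hyf : y ∈ frontier G := by
      rw [hG.frontier_eq]; exact ⟨hyc, hn⟩
    have h1 := (abs_le.mp (hlip u hcu hHu y hyc)).2
    have h2 := (abs_le.mp (hlip v hcv hHv y hyc)).1
    have h3 := hbd y hyf
    have h4 : ‖x0 - y‖ ≤ ρ := by rw [norm_sub_rev]; exact mem_closedBall_iff_norm.mp hyb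
    nlinarith
  obtain ⟨x, hxG, y, hyG, hxy, hxx0, hfirst, hsecond, hval⟩ := doubling hG hu hv z k hx0G hball hHv
    hχ0 hM0.le (fun x hx => hx0max' x (subset_closure hx)) hρ hκ hμ hi hii
  have hCv : ContDiffAt ℝ 2 v y :=
    hv.contDiffAt (mem_of_superset (hG.mem_nhds hyG) subset_closure)
  set ex := Real.exp (lam * (x k - z k)) with hex
  have hex0 : 0 < ex := Real.exp_pos _
  have hgrad : ∀ g : E d → ℝ, HolderBound χ G g M → ∀ x ∈ G, vecNorm (fun i => D1 g x i) ≤ M := by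
    intro g hH x hx
    refine (vecNorm_D1_le (fderiv ℝ g x)).trans ?_
    refine norm_fderiv_le_of_lip' ℝ hM0.le ?_
    filter_upwards [hG.mem_nhds hx] with x' hx' using hH.2.2.1 x' hx' x hx
  have hsq : ∀ ξ : Fin d → ℝ, 0 ≤ ∑ i, ξ i ^ 2 := fun ξ => Finset.sum_nonneg fun _ _ => sq_nonneg _
  -- F inequalities
  have hFu : 0 ≤ Fop a b c f u x := by
    rcases le_max_iff.mp (hequ x hxG) with h | h
    · exact h
    · exfalso
      have hb := P_bound hδhat0 hP (c := 2 * κ + 2 * μ) (by positivity) (fun i j => D2 u x i j)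
        (fun i => D1 u x i) (u x) (by
          intro ξ
          have := hsecond ξ 0
          simp only [Pi.zero_apply, mul_zero, Finset.sum_const_zero, sub_zero] at this
          have h3 : 0 ≤ w * lam ^ 2 * ex * ξ k ^ 2 := by positivity
          linarith)
      have h1 := mul_le_mul_of_nonneg_left (hgrad u hHu x hxG) hK1'
      have h2 := mul_le_mul_of_nonneg_left (hHu.2.1 x hxG) hK1'
      unfold Pop at h
      linarith
  have hYlow : ∀ ζ : Fin d → ℝ, -(∑ i, ∑ j, D2 v y i j * ζ i * ζ j) ≤ 2 * κ * ∑ i, ζ i ^ 2 := by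
    intro ζ
    have := hsecond 0 ζ
    simpa using this
  have hFv : Fop a b c f v y ≤ 0 := by
    rcases min_le_iff.mp (heqv y hyG) with h | h
    · exact h
    · exfalso
      have hb := P_bound hδhat0 hP (c := 2 * κ) (by positivity)
        (fun i j => D2 (fun y => -(v y)) y i j)
        (fun i => D1 (fun y => -(v y)) y i) (-(v y)) (by
          intro ξ
          have := hYlow ξ
          simp only [D2_neg, neg_mul, Finset.sum_neg_distrib]
          exact this)
      have e1 : vecNorm (fun i => D1 (fun y => -(v y)) y i) = vecNorm (fun i => D1 v y i) := by
        simp only [vecNorm, D1_neg, neg_sq]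
      rw [e1, abs_neg] at hb
      have h1 := mul_le_mul_of_nonneg_left (hgrad v hHv y hyG) hK1'
      have h2 := mul_le_mul_of_nonneg_left (hHv.2.1 y hyG) hK1'
      have h3 : 0 ≤ 2 * μ * (d * δhat⁻¹) := by positivity
      unfold Pop at h
      linarith
  set R := M * ρ ^ χ / κ with hR
  have hR0 : 0 ≤ R := by positivity
  set Λ := δ⁻¹ * (1 + 3 * K0 * M + 2 * κ * (d * δ⁻¹)) with hΛ
  have hΛ0 : 0 ≤ Λ := by positivity
  set Err := (Λ + 2 * κ) / (4 * δ) * (K0 * R ^ γ) ^ 2 + 2 * μ * (d * δ⁻¹ + K0)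
        + K0 * M * t0 + 3 * (K0 * M * ω t0) with hErrdef
  obtain ⟨α, β, hαβu, hαβv⟩ := isaacs_pair hA hB hC u v x y
    (θ := min 1 ((ε - Err) / 2)) (lt_min one_pos (by linarith)) hFu hFv
  have hθ1 : min 1 ((ε - Err) / 2) ≤ 1 := min_le_left _ _
  have hθ2 : min 1 ((ε - Err) / 2) ≤ (ε - Err) / 2 := min_le_right _ _
  obtain ⟨ha, -, hb, hc, hf, -, -, haH, hbω, hcω, hfω⟩ := hC
  unfold Lop at hαβu hαβv
  -- bounds on lower-order terms
  have ht0 : 0 ≤ t0 := hR0.trans hiv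
  have hωxy : ω ‖x - y‖ ≤ ω t0 := hω (norm_nonneg _) ht0 (hxy.trans hiv)
  have hωt0 : 0 ≤ ω t0 := by rw [← hω0]; exact hω (Set.mem_Ici.mpr le_rfl) ht0 ht0
  have hDv := hgrad v hHv y hyG
  have hvy := hHv.2.1 y hyG
  have hbv : |∑ i, b α β y i * D1 v y i| ≤ K0 * M :=
    (cs_vec _ _).trans (mul_le_mul (hb α β y) hDv (vecNorm_nonneg _) hK0)
  have hcv : |c α β y * v y| ≤ K0 * M := by
    rw [abs_mul, abs_of_nonneg (hc α β y).1]
    exact mul_le_mul (hc α β y).2 hvy (abs_nonneg _) hK0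
  have hfy := hf α β y
  have hH : ∑ i, ∑ j, a α β y i j * D2 v y i j ≤ 1 + 3 * K0 * M := by
    have e1 := (abs_le.mp hbv).1
    have e2 := (abs_le.mp hcv).2
    have e3 := (abs_le.mp hfy).1
    have e4 : K0 ≤ K0 * M := le_mul_of_one_le_right hK0 hM
    linarith
  have hYup := Y_upper hδ0 hκ (ha α β y) (fun i j => D2 v y i j) hYlow hH
  -- ishii
  set q : ℝ := w * lam ^ 2 * ex with hq
  have hXt : ∀ ξ : Fin d → ℝ, ∑ i, ∑ j, (D2 u x i j + (if i = k then (if j = k then q else 0) else 0)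
      - (if i = j then 2 * μ else 0)) * ξ i * ξ j =
      (∑ i, ∑ j, D2 u x i j * ξ i * ξ j) + q * ξ k ^ 2 - 2 * μ * ∑ i, ξ i ^ 2 := by
    intro ξ
    simp only [sub_mul, add_mul, Finset.sum_add_distrib, Finset.sum_sub_distrib, ite_mul, zero_mul,
      Finset.sum_ite_eq, Finset.sum_ite_eq', Finset.mem_univ, if_true, Finset.sum_const_zero,
      Finset.sum_ite_irrel]
    rw [Finset.mul_sum]
    congr 1
    · ring
    · exact Finset.sum_congr rfl fun _ _ => by ring
  have hish := ishii (m := a α β x) (n := a α β y) hδ0 hκ hΛ0 (ha α β x)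
    (fun i j => D2 u x i j + (if i = k then (if j = k then q else 0) else 0)
      - (if i = j then 2 * μ else 0)) (fun i j => D2 v y i j) (fun i j => D2_symm hCv i j)
    (by intro ξ ζ; simp only [hXt]; exact hsecond ξ ζ) hYup
  have hXa : ∑ i, ∑ j, a α β x i j * (D2 u x i j + (if i = k then (if j = k then q else 0) else 0)
      - (if i = j then 2 * μ else 0)) =
      (∑ i, ∑ j, a α β x i j * D2 u x i j) + a α β x k k * q - 2 * μ * ∑ i, a α β x i i := by
    simp only [mul_sub, mul_add, Finset.sum_add_distrib, Finset.sum_sub_distrib, mul_ite, mul_zero,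
      Finset.sum_ite_eq, Finset.sum_ite_eq', Finset.mem_univ, if_true, Finset.sum_const_zero,
      Finset.sum_ite_irrel]
    rw [← Finset.sum_mul]; ring
  rw [hXa] at hish
  have hmat : matNorm (fun i j => a α β x i j - a α β y i j) ^ 2 ≤ (K0 * R ^ γ) ^ 2 := by
    refine pow_le_pow_left₀ (Real.sqrt_nonneg _) ((haH α β x y).trans ?_) 2
    refine mul_le_mul_of_nonneg_left ?_ hK0
    exact Real.rpow_le_rpow (norm_nonneg _) hxy hγ0
  have hmat2 := mul_le_mul_of_nonneg_left hmat
    (show 0 ≤ (Λ + 2 * κ) / (4 * δ) by positivity)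
  have htr := mul_le_mul_of_nonneg_left (trace_upper (ha α β x)) (show 0 ≤ 2 * μ by positivity)
  -- first order term
  have hb1 : ∑ i, b α β x i * D1 u x i = (∑ i, b α β x i * D1 v y i)
      + 2 * μ * (∑ i, b α β x i * (x i - x0 i)) - b α β x k * (w * lam * ex) := by
    simp only [hfirst, mul_sub, mul_add, Finset.sum_sub_distrib, Finset.sum_add_distrib, mul_ite,
      mul_zero, Finset.sum_ite_eq', Finset.mem_univ, if_true, Finset.mul_sum]
    congr 1
    rw [add_right_inj, ← Finset.sum_sub_distrib, ← Finset.sum_sub_distrib]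
    exact Finset.sum_congr rfl fun _ _ => by ring
  have hb2 : ∑ i, b α β x i * (x i - x0 i) ≤ K0 := by
    have h1 := (le_abs_self _).trans (cs_vec (b α β x) (fun i => x i - x0 i))
    have h2 : vecNorm (fun i => x i - x0 i) ≤ 1 := by
      have : vecNorm (fun i => x i - x0 i) = ‖x - x0‖ := vecNorm_eq (x - x0)
      rw [this]; linarith
    refine h1.trans ((mul_le_mul (hb α β x) h2 (vecNorm_nonneg _) hK0).trans ?_)
    linarith
  have hb2' := mul_le_mul_of_nonneg_left hb2 (show 0 ≤ 2 * μ by positivity)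
  have hb3 : (∑ i, b α β x i * D1 v y i) - (∑ i, b α β y i * D1 v y i) ≤ K0 * M * ω t0 := by
    have e : (∑ i, b α β x i * D1 v y i) - (∑ i, b α β y i * D1 v y i) =
        ∑ i, (b α β x i - b α β y i) * D1 v y i := by
      rw [← Finset.sum_sub_distrib]; exact Finset.sum_congr rfl fun _ _ => by ring
    rw [e]
    refine (le_abs_self _).trans ((cs_vec _ _).trans ?_)
    calc _ ≤ (K0 * ω t0) * M := mul_le_mul ((hbω α β x y).trans (by gcongr)) hDv
          (vecNorm_nonneg _) (by positivity)
      _ = _ := by ring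
  have hbk : -K0 ≤ b α β x k := by
    have h1 : |b α β x k| ≤ vecNorm (b α β x) := by
      refine Real.abs_le_sqrt ?_
      exact Finset.single_le_sum (f := fun i => b α β x i ^ 2) (fun _ _ => sq_nonneg _)
        (Finset.mem_univ k)
    exact (abs_le.mp (h1.trans (hb α β x))).1
  have hbar : ε ≤ a α β x k k * q + b α β x k * (w * lam * ex) := by
    have h1 := hexp_ge x (subset_closure hxG)
    have h2 := (diag_bounds (ha α β x) k).1
    have h3 : a α β x k k * q + b α β x k * (w * lam * ex) =
      (w * lam * ex) * (lam * a α β x k k + b α β x k) := by rw [hq]; ring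
    have h4 : 1 ≤ lam * a α β x k k + b α β x k := by
      have h5 : lam * δ = K0 + 1 := by rw [hlam]; field_simp
      have h7 := mul_le_mul_of_nonneg_left h2 hlam0.le
      linarith only [h5, h7, hbk]
    rw [h3]
    have h6 : 0 < w * lam * ex := by positivity
    exact h1.trans (le_mul_of_one_le_right h6.le h4)
  -- zero order
  have hc1 : -(c α β x * u x) + c α β y * v y ≤ K0 * M * t0 + K0 * M * ω t0 := by
    have h1 : -(M * t0) ≤ u x - v y := by
      have h2 := hexp_le x (subset_closure hxG)
      have h3 := hx0max' x1 (subset_closure hx1)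
      have h4 : M * ‖x - y‖ ≤ M * t0 := by gcongr; exact hxy.trans hiv
      have h5 : 0 < w * Real.exp (lam * (x1 k - z k)) := by positivity
      linarith
    have h2 : |c α β x - c α β y| * |v y| ≤ (K0 * ω t0) * M :=
      mul_le_mul ((hcω α β x y).trans (by gcongr)) hvy (abs_nonneg _) (by positivity)
    rw [← abs_mul] at h2
    have h3 := (abs_le.mp h2).1
    have h4 := mul_le_mul_of_nonneg_left h1 (hc α β x).1
    have h5 : c α β x * (M * t0) ≤ K0 * (M * t0) :=
      mul_le_mul_of_nonneg_right (hc α β x).2 (by positivity)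
    have h6 : -(c α β x * u x) + c α β y * v y =
      -(c α β x * (u x - v y)) - (c α β x - c α β y) * v y := by ring
    rw [h6]
    clear_value w ex R Λ Err q
    linarith only [h3, h4, h5]
  have hf1 : f α β x - f α β y ≤ K0 * M * ω t0 := by
    refine (le_abs_self _).trans ((hfω α β x y).trans ?_)
    calc K0 * ω ‖x - y‖ ≤ K0 * ω t0 := by gcongr
      _ ≤ K0 * ω t0 * M := le_mul_of_one_le_right (by positivity) hM
      _ = _ := by ring
  have hErr' : Err = (Λ + 2 * κ) / (4 * δ) * (K0 * R ^ γ) ^ 2 + 2 * μ * (d * δ⁻¹ + K0)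
        + K0 * M * t0 + 3 * (K0 * M * ω t0) := rfl
  linarith


lemma exps {χ τ γ : ℝ} (hχ0 : 0 < χ) (hχ1 : χ < 1) (hτ0 : 0 < τ)
    (hγ : γ = (4 - 3 * χ) / (8 - 4 * χ)) :
    0 ≤ γ ∧ γ ≤ 1 ∧ ∃ q η s : ℝ, 0 < q ∧ 0 < s ∧ 0 < η ∧ η < 1 ∧
      2 * (η - q * χ) ≤ (1 - χ / 4 - 2 * q) - s ∧
      η - q * χ ≤ (1 - q) - s ∧
      η - q ≤ -(χ / 4) - s ∧
      η - q * χ ≤ -(η / τ) - s ∧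
      1 + 2 * γ * (η - q * χ - 1) ≤ -(χ / 4) - s := by
  have h84 : 0 < 8 - 4 * χ := by linarith
  have h87 : 0 < 8 - 7 * χ := by linarith
  have h87n : 8 - 7 * χ ≠ 0 := h87.ne'
  have hγ0 : 0 ≤ γ := by rw [hγ]; apply div_nonneg <;> linarith
  have hγ1 : γ ≤ 1 / 2 := by rw [hγ, div_le_iff₀ h84]; linarith
  obtain ⟨q, hq⟩ : ∃ q : ℝ, q = (4 - χ) / (8 - 7 * χ) := ⟨_, rfl⟩
  have hq2 : 1 / 2 ≤ q := by rw [hq, le_div_iff₀ h87]; linarith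
  have hqr : q * (8 - 7 * χ) = 4 - χ := by rw [hq]; exact div_mul_cancel₀ _ h87n
  have hg : γ * (8 - 4 * χ) = 4 - 3 * χ := by rw [hγ]; exact div_mul_cancel₀ _ h84.ne'
  have s1 : 1 - χ / 4 - 2 * q + 2 * (q * χ) = (4 - χ) * χ / (4 * (8 - 7 * χ)) := by
    rw [eq_div_iff (by linarith)]; linear_combination (8 * (χ - 1)) * hqr
  have s1' : 0 < (4 - χ) * χ / (4 * (8 - 7 * χ)) := by
    apply div_pos (mul_pos (by linarith) hχ0) (by linarith)
  have s5 : 2 * γ * (q * χ) - (1 - 2 * γ) - χ / 4 =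
      χ * χ * (4 - χ) / (2 * (8 - 7 * χ) * (4 - 2 * χ)) := by
    have h42 : 4 - 2 * χ ≠ 0 := by linarith
    have h2 : 2 - χ ≠ 0 := by linarith
    rw [eq_div_iff (by simp only [ne_eq, mul_eq_zero, not_or]; exact ⟨⟨two_ne_zero, h87n⟩, h42⟩)]
    linear_combination (2 * χ * q * (8 - 7 * χ) + 2 * (8 - 7 * χ)) * hg
      + (2 * χ * (4 - 3 * χ)) * hqr
  have s5' : 0 < χ * χ * (4 - χ) / (2 * (8 - 7 * χ) * (4 - 2 * χ)) := by
    apply div_pos (mul_pos (mul_pos hχ0 hχ0) (by linarith))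
      (mul_pos (by linarith) (by linarith))
  rw [← s1] at s1'
  rw [← s5] at s5'
  have s4' : 0 < q * χ := mul_pos (by linarith) hχ0
  obtain ⟨σ, hσ0, h1, h4, h5, h3⟩ : ∃ σ : ℝ, 0 < σ ∧ σ ≤ 1 - χ / 4 - 2 * q + 2 * (q * χ) ∧
      σ ≤ q * χ ∧ σ ≤ 2 * γ * (q * χ) - (1 - 2 * γ) - χ / 4 ∧ σ ≤ 1 / 4 :=
    ⟨min (1 - χ / 4 - 2 * q + 2 * (q * χ)) (min (q * χ)
      (min (2 * γ * (q * χ) - (1 - 2 * γ) - χ / 4) (1 / 4))),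
      lt_min s1' (lt_min s4' (lt_min s5' (by norm_num))), min_le_left _ _,
      (min_le_right _ _).trans (min_le_left _ _),
      (min_le_right _ _).trans ((min_le_right _ _).trans (min_le_left _ _)),
      (min_le_right _ _).trans ((min_le_right _ _).trans (min_le_right _ _))⟩
  have hτi : 0 < 1 / τ := by positivity
  obtain ⟨η, hη⟩ : ∃ η : ℝ, η = σ / (2 * (3 + 1 / τ)) := ⟨_, rfl⟩
  have hη0 : 0 < η := by rw [hη]; positivity
  have hηe : 3 * η + η / τ = σ / 2 := by
    rw [hη]; field_simp
  have hητ : 0 < η / τ := by positivity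
  refine ⟨hγ0, by linarith, q, η, σ / 2, by linarith, by linarith, hη0, by linarith, by linarith,
    by linarith, by linarith, by linarith, ?_⟩
  have : 2 * γ * η ≤ η := by nlinarith
  nlinarith

lemma rpow_tool {K s c e1 e2 : ℝ} (hK : 1 ≤ K) (hs : K ^ (-s) ≤ c) (he : e1 ≤ e2 - s) :
    K ^ e1 ≤ c * K ^ e2 := by
  have hK0 : 0 < K := by linarith
  calc K ^ e1 ≤ K ^ (-s + e2) := Real.rpow_le_rpow_of_exponent_le hK (by linarith)
    _ = K ^ (-s) * K ^ e2 := Real.rpow_add hK0 _ _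
    _ ≤ _ := by gcongr

lemma params {χ τ γ q η s c1 K M : ℝ} (hγ0 : 0 ≤ γ) (hγ1 : γ ≤ 1)
    (hτ0 : 0 < τ) (hs : 0 < s)
    (e1 : 2 * (η - q * χ) ≤ (1 - χ / 4 - 2 * q) - s)
    (e2 : η - q * χ ≤ (1 - q) - s)
    (e3 : η - q ≤ -(χ / 4) - s)
    (e4 : η - q * χ ≤ -(η / τ) - s)
    (e5 : 1 + 2 * γ * (η - q * χ - 1) ≤ -(χ / 4) - s)
    (hc0 : 0 < c1) (hc1 : c1 ≤ 1) (hK : 1 ≤ K) (hM : 1 ≤ M) (hMK : M ≤ K ^ η)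
    (hKs : K ^ (-s) ≤ c1 / 4) :
    (M * (K ^ (-q)) ^ χ) ^ 2 ≤ (c1 * K) * K ^ (-(χ / 4)) * (K ^ (-q)) ^ 2 ∧
    2 * (M * (K ^ (-q)) ^ χ) < (c1 * K) * K ^ (-q) ∧
    2 * M * K ^ (-q) ≤ K ^ (-(χ / 4)) ∧
    M * (K ^ (-q)) ^ χ / (c1 * K) ≤ M ^ (-(1 / τ)) * K⁻¹ ∧
    K * ((M * (K ^ (-q)) ^ χ / (c1 * K)) ^ γ) ^ 2 ≤ (c1⁻¹) ^ 2 * K ^ (-(χ / 4)) := by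
  have hK0 : 0 < K := by linarith
  have hM0 : 0 < M := by linarith
  have hρχ : (K ^ (-q)) ^ χ = K ^ (-(q * χ)) := by
    rw [← Real.rpow_mul hK0.le]; congr 1; ring
  have hA : M * (K ^ (-q)) ^ χ ≤ K ^ (η - q * χ) := by
    rw [hρχ, sub_eq_add_neg, Real.rpow_add hK0]; gcongr
  have hA0 : 0 < M * (K ^ (-q)) ^ χ := by positivity
  have hsq : ∀ e : ℝ, (K ^ e) ^ 2 = K ^ (2 * e) := by
    intro e; rw [← Real.rpow_natCast, ← Real.rpow_mul hK0.le]; congr 1; push_cast; ring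
  refine ⟨?_, ?_, ?_, ?_, ?_⟩
  · calc (M * (K ^ (-q)) ^ χ) ^ 2 ≤ (K ^ (η - q * χ)) ^ 2 := by gcongr
      _ = K ^ (2 * (η - q * χ)) := hsq _
      _ ≤ c1 / 4 * K ^ (1 - χ / 4 - 2 * q) := rpow_tool hK hKs e1
      _ ≤ c1 * K ^ (1 - χ / 4 - 2 * q) := by gcongr; linarith
      _ = _ := by
        rw [hsq, mul_assoc, mul_assoc, ← Real.rpow_add hK0]
        nth_rewrite 2 [← Real.rpow_one K]
        rw [← Real.rpow_add hK0]; congr 2; ring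
  · have h := rpow_tool hK hKs e2
    have e : K ^ (1 - q) = K * K ^ (-q) := by
      rw [sub_eq_add_neg, Real.rpow_add hK0, Real.rpow_one]
    rw [e] at h
    have : 0 < c1 * K * K ^ (-q) := by positivity
    linarith
  · have h := rpow_tool hK hKs e3
    have h1 : M * K ^ (-q) ≤ K ^ (η - q) := by
      rw [sub_eq_add_neg, Real.rpow_add hK0]; gcongr
    have : 0 < K ^ (-(χ / 4)) := by positivity
    nlinarith
  · have h := rpow_tool hK hKs e4
    have h1 : K ^ (-(η / τ)) ≤ M ^ (-(1 / τ)) := by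
      have : K ^ (-(η / τ)) = (K ^ η) ^ (-(1 / τ)) := by
        rw [← Real.rpow_mul hK0.le]; congr 1; ring
      rw [this]
      exact Real.rpow_le_rpow_of_nonpos hM0 hMK (by simp only [Left.neg_nonpos_iff]; positivity)
    rw [div_le_iff₀ (by positivity)]
    have h2 : M ^ (-(1 / τ)) * K⁻¹ * (c1 * K) = c1 * M ^ (-(1 / τ)) := by field_simp
    rw [h2]
    have h3 : 0 < M ^ (-(1 / τ)) := by positivity
    nlinarith
  · have hR : M * (K ^ (-q)) ^ χ / (c1 * K) ≤ c1⁻¹ * K ^ (η - q * χ - 1) := by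
      rw [Real.rpow_sub_one hK0.ne', div_le_iff₀ (by positivity)]
      refine hA.trans (le_of_eq ?_)
      field_simp
    have hci : 1 ≤ c1⁻¹ := (one_le_inv₀ hc0).mpr hc1
    have hRγ : (M * (K ^ (-q)) ^ χ / (c1 * K)) ^ γ ≤ c1⁻¹ * K ^ (γ * (η - q * χ - 1)) := by
      calc _ ≤ (c1⁻¹ * K ^ (η - q * χ - 1)) ^ γ := Real.rpow_le_rpow (by positivity) hR hγ0
        _ = (c1⁻¹) ^ γ * K ^ (γ * (η - q * χ - 1)) := by
          rw [Real.mul_rpow (by positivity) (by positivity), ← Real.rpow_mul hK0.le]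
          congr 2; ring
        _ ≤ _ := by
          gcongr
          calc (c1⁻¹) ^ γ ≤ (c1⁻¹) ^ (1 : ℝ) := Real.rpow_le_rpow_of_exponent_le hci hγ1
            _ = _ := Real.rpow_one _
    calc _ ≤ K * (c1⁻¹ * K ^ (γ * (η - q * χ - 1))) ^ 2 := by gcongr
      _ = (c1⁻¹) ^ 2 * K ^ (1 + 2 * γ * (η - q * χ - 1)) := by
        rw [mul_pow, hsq, Real.rpow_add hK0, Real.rpow_one, mul_assoc 2 γ]; ring
      _ ≤ _ := by
        gcongr
        linarith

lemma final_aux {d : ℕ} (hd : 1 ≤ d) {δ K0 χ γ δhat K1 τ : ℝ}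
    {P : (Fin d → Fin d → ℝ) → (Fin d → ℝ) → ℝ → ℝ}
    (hδ0 : 0 < δ) (hK0 : 0 ≤ K0) (hχ0 : 0 < χ) (hχ1 : χ < 1)
    (hδhat0 : 0 < δhat) (hK1 : K0 ≤ K1)
    (hP : PAssump δhat K1 P) (hτ0 : 0 < τ)
    {q η s : ℝ} (hγ0 : 0 ≤ γ) (hγ1 : γ ≤ 1) (hq : 0 < q) (hs : 0 < s) (hη : 0 < η) (hη1 : η < 1)
    (e1 : 2 * (η - q * χ) ≤ (1 - χ / 4 - 2 * q) - s)
    (e2 : η - q * χ ≤ (1 - q) - s)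
    (e3 : η - q ≤ -(χ / 4) - s)
    (e4 : η - q * χ ≤ -(η / τ) - s)
    (e5 : 1 + 2 * γ * (η - q * χ - 1) ≤ -(χ / 4) - s) (D : ℝ) :
    ∃ N : ℝ, 0 < N ∧
      ∀ (A B : Type) [MetricSpace A] [MetricSpace B],
      ∀ (ω : ℝ → ℝ) (a : A → B → E d → Fin d → Fin d → ℝ)
        (b : A → B → E d → Fin d → ℝ) (c f : A → B → E d → ℝ)
        (G : Set (E d)) (u v : E d → ℝ) (K M : ℝ),
        Nonempty A → Nonempty B →
        ModulusAssump χ ω → CoeffAssump δ K0 γ ω a b c f →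
        IsOpen G → G.Nonempty → Bornology.IsBounded G → Metric.diam G ≤ D →
        ContDiffOn ℝ 2 u (closure G) → ContDiffOn ℝ 2 v (closure G) →
        1 ≤ K →
        (∀ x ∈ G, 0 ≤ max (Fop a b c f u x) (Pop P u x - K)) →
        (∀ x ∈ G, min (Fop a b c f v x) (-(Pop P (fun y => -(v y)) x) + K) ≤ 0) →
        (∀ x ∈ frontier G, u x ≤ v x) →
        1 ≤ M → HolderBound χ G u M → HolderBound χ G v M →
        N * M ^ (1 / η) ≤ K →
        ∀ x ∈ G, u x - v x ≤ N * K ^ (-(χ / 4)) + N * M * ω (M ^ (-(1 / τ)) * K⁻¹) := by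
  obtain ⟨lam, hlam⟩ : ∃ lam : ℝ, lam = (K0 + 1) / δ := ⟨_, rfl⟩
  have hlam0 : 0 < lam := by rw [hlam]; positivity
  have hd0 : (0:ℝ) < d := by exact_mod_cast hd
  have hK1' : 0 ≤ K1 := hK0.trans hK1
  obtain ⟨c1, hc0, hc1, hcd⟩ : ∃ c1 : ℝ, 0 < c1 ∧ c1 ≤ 1 ∧ c1 ≤ δhat / (8 * d) :=
    ⟨min 1 (δhat / (8 * d)), lt_min one_pos (by positivity), min_le_left _ _, min_le_right _ _⟩
  obtain ⟨Ca, hCa⟩ : ∃ Ca : ℝ, Ca = (δ⁻¹ * (1 + 3 * K0 + 2 * (d * δ⁻¹)) + 2) / (4 * δ) := ⟨_, rfl⟩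
  have hCa0 : 0 ≤ Ca := by rw [hCa]; positivity
  obtain ⟨C2, hC2⟩ : ∃ C2 : ℝ, C2 = 1 + Ca * K0 ^ 2 * (c1⁻¹) ^ 2 + 2 * (d * δ⁻¹ + K0) + 4 * K0 :=
    ⟨_, rfl⟩
  have hC21 : 1 ≤ C2 := by
    have h1 : 0 ≤ Ca * K0 ^ 2 * (c1⁻¹) ^ 2 := by positivity
    have h2 : 0 ≤ 2 * (d * δ⁻¹ + K0) := by positivity
    linarith
  obtain ⟨Q, hQ⟩ : ∃ Q : ℝ, Q = C2 * (1 + Real.exp (2 * lam * D) / lam) := ⟨_, rfl⟩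
  have hQ0 : 0 < Q := by rw [hQ]; positivity
  obtain ⟨N0, hN0⟩ : ∃ N0 : ℝ, N0 = (c1 / 4) ^ (-(1 / s)) := ⟨_, rfl⟩
  have hN0p : 0 < N0 := by rw [hN0]; positivity
  obtain ⟨N, hN⟩ : ∃ N : ℝ, N = 1 + N0 + 8 * d * δhat⁻¹ + 8 * K1 + Q := ⟨_, rfl⟩
  have h8 : 0 < 8 * d * δhat⁻¹ := by positivity
  have hNp : 1 ≤ N := by linarith
  refine ⟨N, by linarith, ?_⟩
  intro A B _ _ ω a b c f G u v K M hA hB hω hC hG hGne hGb hdiam hu hv hK hequ heqv hbd hM hHu hHv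
    hNK x hx
  have hM0 : 0 < M := by linarith
  have hKp : 0 < K := by linarith
  have hηi : 1 ≤ 1 / η := by rw [le_div_iff₀ hη]; linarith
  have hMη : M ≤ M ^ (1 / η) := by
    calc M = M ^ (1:ℝ) := (Real.rpow_one M).symm
      _ ≤ _ := Real.rpow_le_rpow_of_exponent_le hM hηi
  have hNM : N * M ≤ K := (mul_le_mul_of_nonneg_left hMη (by linarith)).trans hNK
  have hNK' : N ≤ K := (le_mul_of_one_le_right (by linarith) hM).trans hNM
  have hMK1 : M ≤ K := (le_mul_of_one_le_left hM0.le hNp).trans hNM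
  have hMK : M ≤ K ^ η := by
    have h1 : M ^ (1 / η) ≤ K := (le_mul_of_one_le_left (by positivity) hNp).trans hNK
    calc M = (M ^ (1 / η)) ^ η := by
          rw [← Real.rpow_mul hM0.le, one_div_mul_cancel hη.ne', Real.rpow_one]
      _ ≤ _ := Real.rpow_le_rpow (by positivity) h1 hη.le
  have hKs : K ^ (-s) ≤ c1 / 4 := by
    have h1 : N0 ≤ K := by linarith
    calc K ^ (-s) ≤ N0 ^ (-s) := Real.rpow_le_rpow_of_nonpos hN0p h1 (by linarith)
      _ = c1 / 4 := by
        rw [hN0, ← Real.rpow_mul (by positivity)]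
        have : -(1 / s) * -s = 1 := by field_simp
        rw [this, Real.rpow_one]
  obtain ⟨p1, p2, p3, p4, p5⟩ := params hγ0 hγ1 hτ0 hs e1 e2 e3 e4 e5 hc0 hc1 hK hM hMK hKs
  obtain ⟨-, hωm, hω0, hωχ⟩ := hω
  obtain ⟨t0, ht0⟩ : ∃ t0 : ℝ, t0 = M ^ (-(1 / τ)) * K⁻¹ := ⟨_, rfl⟩
  rw [← ht0] at p4 ⊢
  have ht0p : 0 < t0 := by rw [ht0]; positivity
  have ht01 : t0 ≤ 1 := by
    rw [ht0]
    have h1 : M ^ (-(1 / τ)) ≤ 1 := Real.rpow_le_one_of_one_le_of_nonpos hM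
      (by simp only [Left.neg_nonpos_iff]; positivity)
    exact mul_le_one₀ h1 (by positivity) (inv_le_one_of_one_le₀ hK)
  have htω : t0 ≤ ω t0 := by
    refine le_trans ?_ (hωχ t0 ⟨ht0p.le, ht01⟩)
    calc t0 = t0 ^ (1:ℝ) := (Real.rpow_one _).symm
      _ ≤ _ := Real.rpow_le_rpow_of_exponent_ge ht0p ht01 hχ1.le
  have hωp : 0 < ω t0 := ht0p.trans_le htω
  obtain ⟨μ, hμ⟩ : ∃ μ : ℝ, μ = K ^ (-(χ / 4)) := ⟨_, rfl⟩
  rw [← hμ] at p1 p3 p5 ⊢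
  have hμ0 : 0 < μ := by rw [hμ]; positivity
  have hμ1 : μ ≤ 1 := by rw [hμ]; exact Real.rpow_le_one_of_one_le_of_nonpos hK (by linarith)
  obtain ⟨ρ, hρ⟩ : ∃ ρ : ℝ, ρ = K ^ (-q) := ⟨_, rfl⟩
  rw [← hρ] at p1 p2 p3 p4 p5
  have hρ0 : 0 < ρ := by rw [hρ]; positivity
  have hρ1 : ρ ≤ 1 := by rw [hρ]; exact Real.rpow_le_one_of_one_le_of_nonpos hK (by linarith)
  obtain ⟨κ, hκ⟩ : ∃ κ : ℝ, κ = c1 * K := ⟨_, rfl⟩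
  rw [← hκ] at p1 p2 p4 p5
  have hκ0 : 0 < κ := by rw [hκ]; positivity
  have hκK : κ ≤ K := by rw [hκ]; exact mul_le_of_le_one_left hKp.le hc1
  obtain ⟨ε, hε⟩ : ∃ ε : ℝ, ε = C2 * (μ + M * ω t0) := ⟨_, rfl⟩
  have hMω : 0 < M * ω t0 := by positivity
  have hPK : (2 * κ + 2 * μ) * (d * δhat⁻¹) + K1 * M + K1 * M < K := by
    have h1 : 2 * κ * (d * δhat⁻¹) ≤ K / 4 := by
      rw [hκ]
      have : c1 * (8 * d) ≤ δhat := by rwa [le_div_iff₀ (by positivity)] at hcd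
      have h2 : c1 * (8 * d) * δhat⁻¹ ≤ 1 := by
        rw [← div_eq_mul_inv, div_le_one hδhat0]; exact this
      have h3 := mul_le_mul_of_nonneg_right h2 hKp.le
      linarith
    have h2 : 2 * μ * (d * δhat⁻¹) ≤ K / 4 := by
      have h3 : μ * (8 * d * δhat⁻¹) ≤ 1 * (8 * d * δhat⁻¹) := by gcongr
      linarith
    have h3 : 8 * K1 * M ≤ K := by
      refine le_trans ?_ hNM
      gcongr; linarith
    linarith
  have hiii : 2 * M * ρ ≤ ε := by
    rw [hε]
    have h1 : μ + M * ω t0 ≤ C2 * (μ + M * ω t0) := le_mul_of_one_le_left (by positivity) hC21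
    linarith
  have hErr : (δ⁻¹ * (1 + 3 * K0 * M + 2 * κ * (d * δ⁻¹)) + 2 * κ) / (4 * δ) *
        (K0 * (M * ρ ^ χ / κ) ^ γ) ^ 2 + 2 * μ * (d * δ⁻¹ + K0)
        + K0 * M * t0 + 3 * (K0 * M * ω t0) < ε := by
    have h1 : (δ⁻¹ * (1 + 3 * K0 * M + 2 * κ * (d * δ⁻¹)) + 2 * κ) / (4 * δ) ≤ Ca * K := by
      rw [hCa, div_mul_eq_mul_div]
      gcongr
      have h2 : 1 + 3 * K0 * M + 2 * κ * (d * δ⁻¹) ≤ (1 + 3 * K0 + 2 * (d * δ⁻¹)) * K := by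
        have h3 : 3 * K0 * M ≤ 3 * K0 * K := by gcongr
        have h4 : 2 * κ * (d * δ⁻¹) ≤ 2 * K * (d * δ⁻¹) := by gcongr
        linarith
      have h3 := mul_le_mul_of_nonneg_left h2 (inv_pos.mpr hδ0).le
      linarith
    have h2 : (δ⁻¹ * (1 + 3 * K0 * M + 2 * κ * (d * δ⁻¹)) + 2 * κ) / (4 * δ) *
        (K0 * (M * ρ ^ χ / κ) ^ γ) ^ 2 ≤ Ca * K0 ^ 2 * (c1⁻¹) ^ 2 * μ := by
      calc _ ≤ Ca * K * (K0 * (M * ρ ^ χ / κ) ^ γ) ^ 2 := by gcongr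
        _ = Ca * K0 ^ 2 * (K * ((M * ρ ^ χ / κ) ^ γ) ^ 2) := by ring
        _ ≤ Ca * K0 ^ 2 * ((c1⁻¹) ^ 2 * μ) := by gcongr
        _ = _ := by ring
    have h3 : K0 * M * t0 ≤ K0 * M * ω t0 := by gcongr
    have h4 : ε = μ + M * ω t0 + Ca * K0 ^ 2 * (c1⁻¹) ^ 2 * μ + 2 * μ * (d * δ⁻¹ + K0)
        + 4 * (K0 * M * ω t0) + (Ca * K0 ^ 2 * (c1⁻¹) ^ 2 * (M * ω t0)
          + 2 * (d * δ⁻¹ + K0) * (M * ω t0) + 4 * K0 * μ) := by rw [hε, hC2]; ring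
    have h5 : 0 ≤ Ca * K0 ^ 2 * (c1⁻¹) ^ 2 * (M * ω t0)
          + 2 * (d * δ⁻¹ + K0) * (M * ω t0) + 4 * K0 * μ := by positivity
    linarith only [h2, h3, h4, h5, hμ0, hMω]
  have hfin := main_estimate ⟨0, hd⟩ hδ0 hK0 hχ0 hγ0 hδhat0 hK1 hP hlam hA hB hωm hω0 hC hG hGne hGb
    hdiam hu hv hequ heqv hbd hM hHu hHv hκ0 hμ0 hρ0 hρ1 hPK p1 p2 hiii p4 hErr x hx
  refine hfin.trans ?_
  have e6 : ε * (1 + Real.exp (2 * lam * D) / lam) = Q * (μ + M * ω t0) := by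
    rw [hε, hQ]; ring
  rw [e6]
  calc Q * (μ + M * ω t0) ≤ N * (μ + M * ω t0) := by gcongr; linarith
    _ = _ := by ring

/-- **Theorem 3.1.** Let `G` be a bounded domain, `u, v ∈ C²(Ḡ)` with
`max(F[u], P[u] - K) ≥ 0 ≥ min(F[v], -P[-v] + K)` in `G` for `K ≥ 1`, `v ≥ u`
on `∂G`, and `‖u‖_{C^{1+χ}(G)}, ‖v‖_{C^{1+χ}(G)} ≤ M` with `M ≥ 1`. Then there
are `N` (depending only on `τ`, `diam G`, `d`, `K0`, `δ`) and `η ∈ (0,1)`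
(depending only on `τ, d, K0, δ`) such that `K ≥ N M^{1/η}` implies
`u - v ≤ N K^{-χ/4} + N M ω(M^{-1/τ} K^{-1})` in `G`. -/
theorem statement12 {d : ℕ} (hd : 1 ≤ d) (δ K0 χ γ δhat K1 τ : ℝ)
    (P : (Fin d → Fin d → ℝ) → (Fin d → ℝ) → ℝ → ℝ)
    (hδ0 : 0 < δ) (hδ1 : δ < 1) (hK0 : 0 ≤ K0) (hχ0 : 0 < χ) (hχ1 : χ < 1)
    (hγ : γ = (4 - 3 * χ) / (8 - 4 * χ))
    (hδhat0 : 0 < δhat) (hδhat1 : δhat < δ) (hK1 : K0 ≤ K1)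
    (hP : PAssump δhat K1 P) (hτ0 : 0 < τ) (hτ1 : τ < 1) :
    ∃ η : ℝ, 0 < η ∧ η < 1 ∧ ∀ D : ℝ, 0 < D → ∃ N : ℝ, 0 < N ∧
      ∀ (A B : Type) [MetricSpace A] [MetricSpace B],
      ∀ (ω : ℝ → ℝ) (a : A → B → E d → Fin d → Fin d → ℝ)
        (b : A → B → E d → Fin d → ℝ) (c f : A → B → E d → ℝ)
        (G : Set (E d)) (u v : E d → ℝ) (K M : ℝ),
        Nonempty A → Nonempty B →
        ModulusAssump χ ω → CoeffAssump δ K0 γ ω a b c f →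
        IsOpen G → G.Nonempty → Bornology.IsBounded G → Metric.diam G ≤ D →
        ContDiffOn ℝ 2 u (closure G) → ContDiffOn ℝ 2 v (closure G) →
        1 ≤ K →
        (∀ x ∈ G, 0 ≤ max (Fop a b c f u x) (Pop P u x - K)) →
        (∀ x ∈ G, min (Fop a b c f v x) (-(Pop P (fun y => -(v y)) x) + K) ≤ 0) →
        (∀ x ∈ frontier G, u x ≤ v x) →
        1 ≤ M → HolderBound χ G u M → HolderBound χ G v M →
        N * M ^ (1 / η) ≤ K →
        ∀ x ∈ G, u x - v x ≤ N * K ^ (-(χ / 4)) + N * M * ω (M ^ (-(1 / τ)) * K⁻¹) := by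
  obtain ⟨hγ0, hγ1, q, η, s, hq, hs, hη, hη1, e1, e2, e3, e4, e5⟩ := exps hχ0 hχ1 hτ0 hγ
  refine ⟨η, hη, hη1, fun D _ => ?_⟩
  exact final_aux hd hδ0 hK0 hχ0 hχ1 hδhat0 hK1 hP hτ0 hγ0 hγ1 hq hs hη hη1 e1 e2 e3 e4 e5 D
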